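/- For every n ≥ 1, every skew shape λ/μ, and fixed alphabets A = {1,…,r}, A′ = {1′,…,s′}: if ≺₁ and ≺₂ are two total orders on A ∪ A′, each refining the natural orders of A and of A′, then the super LLT polynomial computed with ≺₁ equals the super LLT polynomial computed with ≺₂; that is, G_{λ/μ}(X/Y;q) does not depend on the choice of total order between the two alphabets. -/

import Mathlib

/-!
A partition is encoded by the bead configuration of its boundary path (`beads`).  Adding an
`n`-ribbon whose cells have contents `i, …, i + n - 1` moves a bead from `i` to the empty
position `i + n`, and the spin of the ribbon is the number of beads jumped over
(`beads_of_ribAt`, `spin_of_ribAt`).  So ribbons are added by operators `u_i = ribOp q n i` on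
functions of bead configurations.

In a horizontal strip the ribbons can be added in order of increasing content, and in a vertical
strip in order of decreasing content; conversely, ribbons added in such an order form a strip
(`ST.peel`, `ST.insert`).  Consequently a strip with label `a` is added by the product of the
`1 + z_a u_i` with `i` decreasing from left to right (horizontal), or of the `1 - z_a u_i` with
`i` increasing from left to right (vertical), and the super LLT polynomial is a matrix coefficient
of the product of these strip operators over all letters, in the chosen order (`superLLT_eq`).

The operators satisfy `u_i u_i = 0`, `u_i u_j u_i = 0` for `i < j`, and the commutator of `u_i`
and `u_k` commutes with `u_j` for `i < j < k`; moreover `u_N` kills what any factors with smaller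
indices produce from the image of `u_N`.  These relations imply, by induction on the number of
factors, that a decreasing product commutes with an increasing one (`incProd_decProd_comm`,
`ribOp_prod_comm`).  Hence the operators of the letters of `A` can be collected on one side and
those of `A'` on the other without changing the product, and the result involves the natural
orders of `A` and `A'` only.  One of the relations is obtained by cancelling `q ^ 2`, so the
argument is carried out over a polynomial ring and then specialized.
-/

open Finset

namespace SuperLLT

/-- Two cells in `ℕ × ℕ` are adjacent if they share an edge. -/
def Adj (c d : ℕ × ℕ) : Prop :=
  (c.1 = d.1 ∧ (c.2 + 1 = d.2 ∨ d.2 + 1 = c.2)) ∨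
    (c.2 = d.2 ∧ (c.1 + 1 = d.1 ∨ d.1 + 1 = c.1))

/-- A finite set of cells is connected if any two of its cells are joined by a path of
adjacent cells staying inside the set. -/
def ConnectedCells (s : Finset (ℕ × ℕ)) : Prop :=
  ∀ c ∈ s, ∀ d ∈ s, Relation.ReflTransGen (fun a b => a ∈ s ∧ b ∈ s ∧ Adj a b) c d

/-- A set of cells is (the set of cells of) a skew shape if it is the difference of two
Young diagrams. -/
def IsSkewCells (s : Finset (ℕ × ℕ)) : Prop :=
  ∃ μ lam : YoungDiagram, μ ≤ lam ∧ s = lam.cells \ μ.cells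

/-- The set of cells contains no 2×2 square. -/
def NoTwoByTwo (s : Finset (ℕ × ℕ)) : Prop :=
  ∀ i j : ℕ, ¬((i, j) ∈ s ∧ (i + 1, j) ∈ s ∧ (i, j + 1) ∈ s ∧ (i + 1, j + 1) ∈ s)

/-- An `n`-ribbon: a connected skew shape with `n` cells containing no 2×2 square. -/
def IsRibbon (n : ℕ) (s : Finset (ℕ × ℕ)) : Prop :=
  s.card = n ∧ IsSkewCells s ∧ ConnectedCells s ∧ NoTwoByTwo s

/-- The spin of a ribbon: its number of rows minus one. -/
def spin (s : Finset (ℕ × ℕ)) : ℕ :=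
  (s.image Prod.fst).card - 1

/-- The top-right-most cell of a ribbon: minimal row index, maximal column in that row. -/
def topRight (s : Finset (ℕ × ℕ)) : ℕ × ℕ :=
  ((s.image Prod.fst).min.getD 0,
    ((s.filter fun c => c.1 = (s.image Prod.fst).min.getD 0).image Prod.snd).max.getD 0)

/-- The bottom-left-most cell of a ribbon: maximal row index, minimal column in that row. -/
def bottomLeft (s : Finset (ℕ × ℕ)) : ℕ × ℕ :=
  ((s.image Prod.fst).max.getD 0,
    ((s.filter fun c => c.1 = (s.image Prod.fst).max.getD 0).image Prod.snd).min.getD 0)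

/-- The cell `c` of the strip with cell set `strip` touches the northern boundary of the
strip: the cell directly above `c` is not a cell of the strip. -/
def TouchesNorth (strip : Finset (ℕ × ℕ)) (c : ℕ × ℕ) : Prop :=
  c.1 = 0 ∨ (c.1 - 1, c.2) ∉ strip

/-- The cell `c` lies along the (upper-left) boundary of the strip: the cell directly to
the left of `c` is not a cell of the strip.  This is the condition on the bottom-left-most
box of each ribbon of a vertical ribbon strip (equivalently, flipping a vertical strip over
the antidiagonal produces a horizontal strip whose ribbon heads touch the northern
boundary). -/
def TouchesWest (strip : Finset (ℕ × ℕ)) (c : ℕ × ℕ) : Prop :=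
  c.2 = 0 ∨ (c.1, c.2 - 1) ∉ strip

/-- `tiles` is a tiling of the cell set `cells` by `n`-ribbons. -/
def IsTilingOf (n : ℕ) (cells : Finset (ℕ × ℕ)) (tiles : Finset (Finset (ℕ × ℕ))) : Prop :=
  (∀ t ∈ tiles, IsRibbon n t) ∧
    (∀ t ∈ tiles, ∀ t' ∈ tiles, t ≠ t' → Disjoint t t') ∧
    tiles.sup id = cells

/-- A horizontal `n`-ribbon strip tiling: the top-right-most box of every ribbon touches
the northern boundary of the strip. -/
def IsHorizontalTiling (n : ℕ) (cells : Finset (ℕ × ℕ))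
    (tiles : Finset (Finset (ℕ × ℕ))) : Prop :=
  IsTilingOf n cells tiles ∧ ∀ t ∈ tiles, TouchesNorth cells (topRight t)

/-- A vertical `n`-ribbon strip tiling: the bottom-left-most box of every ribbon lies on
the (north-west) boundary of the strip. -/
def IsVerticalTiling (n : ℕ) (cells : Finset (ℕ × ℕ))
    (tiles : Finset (Finset (ℕ × ℕ))) : Prop :=
  IsTilingOf n cells tiles ∧ ∀ t ∈ tiles, TouchesWest cells (bottomLeft t)

open scoped Classical in
/-- `T` is a super `n`-ribbon tableau of shape `lam / μ`: a set of `n`-ribbons, each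
labelled by a letter of `L`, tiling `lam / μ`, such that for every letter `i` the union of
`μ` with the ribbons labelled `≼ i` (with respect to the total order `le` on `L`) is a
partition shape, the ribbons with a fixed label `a` with `horiz a` form a horizontal
ribbon strip, and the ribbons with a fixed label `b` with `¬ horiz b` form a vertical
ribbon strip. -/
def IsSuperTableau (n : ℕ) (μ lam : YoungDiagram) {L : Type*}
    (le : L → L → Prop) (horiz : L → Prop) (T : Finset (Finset (ℕ × ℕ) × L)) : Prop :=
  μ ≤ lam ∧
    (∀ p ∈ T, IsRibbon n p.1) ∧
    (∀ p ∈ T, ∀ p' ∈ T, p ≠ p' → Disjoint p.1 p'.1) ∧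
    (T.sup fun p => p.1) = lam.cells \ μ.cells ∧
    (∀ i : L, ∃ ν : YoungDiagram,
      ν.cells = μ.cells ∪ ((T.filter fun p => le p.2 i).sup fun p => p.1)) ∧
    (∀ p ∈ T,
      (horiz p.2 →
        TouchesNorth ((T.filter fun p' => p'.2 = p.2).sup fun p' => p'.1) (topRight p.1)) ∧
      (¬horiz p.2 →
        TouchesWest ((T.filter fun p' => p'.2 = p.2).sup fun p' => p'.1) (bottomLeft p.1)))

open scoped Classical in
/-- The (finite) set of all super `n`-ribbon tableaux of shape `lam / μ` with letters in
`L`. -/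
noncomputable def superTableaux (n : ℕ) (μ lam : YoungDiagram) (L : Type*) [Fintype L]
    (le : L → L → Prop) (horiz : L → Prop) : Finset (Finset (Finset (ℕ × ℕ) × L)) :=
  ((lam.cells \ μ.cells).powerset ×ˢ (Finset.univ : Finset L)).powerset.filter
    (IsSuperTableau n μ lam le horiz)

/-- The spin of a tableau: the sum of the spins of its ribbons. -/
def tabSpin {L : Type*} (T : Finset (Finset (ℕ × ℕ) × L)) : ℕ :=
  ∑ p ∈ T, spin p.1

open scoped Classical in
/-- The number of ribbons of the tableau `T` labelled `a`. -/
noncomputable def tabWt {L : Type*} (T : Finset (Finset (ℕ × ℕ) × L)) (a : L) : ℕ :=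
  (T.filter fun p => p.2 = a).card

open scoped Classical in
/-- The super LLT polynomial `G_{lam/μ}(X/Y; q)`, evaluated in a commutative ring `R`:
`q` is the spin parameter and `z a` is the variable attached to the letter `a`; a ribbon
labelled by a horizontal letter `a` contributes a factor `z a`, and one labelled by a
vertical letter `b` contributes `-(z b)`.  (It is `0` if `¬ μ ≤ lam`.) -/
noncomputable def superLLT (n : ℕ) (μ lam : YoungDiagram) (L : Type*) [Fintype L]
    (le : L → L → Prop) (horiz : L → Prop) {R : Type*} [CommRing R] (q : R) (z : L → R) :
    R :=
  ∑ T ∈ superTableaux n μ lam L le horiz,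
    q ^ tabSpin T * ∏ a : L, (if horiz a then z a else -z a) ^ tabWt T a

/-- The total order on `Fin r ⊕ Fin s` in which all letters of the first alphabet precede
all letters of the second alphabet. -/
def sumLe {r s : ℕ} : Fin r ⊕ Fin s → Fin r ⊕ Fin s → Prop
  | Sum.inl i, Sum.inl j => i ≤ j
  | Sum.inl _, Sum.inr _ => True
  | Sum.inr _, Sum.inl _ => False
  | Sum.inr i, Sum.inr j => i ≤ j

end SuperLLT

namespace SuperLLT

/-! ### The commutation argument in an abstract algebra -/

section Algebra

variable {R A : Type*} [CommRing R] [Ring A] [Algebra R A]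

/-- The product `(1 + x u₀)(1 + x u₁) ⋯ (1 + x u_{N-1})`. -/
def incProd (u : ℕ → A) (x : R) : ℕ → A
  | 0 => 1
  | N + 1 => incProd u x N * (1 + x • u N)

/-- The product `(1 + y u_{N-1}) ⋯ (1 + y u₁)(1 + y u₀)`. -/
def decProd (u : ℕ → A) (y : R) : ℕ → A
  | 0 => 1
  | N + 1 => (1 + y • u N) * decProd u y N

/-- The sum of the commutators `[c, u_j]` over `j < N`. -/
def commSum (u : ℕ → A) (c : A) (N : ℕ) : A :=
  ∑ j ∈ Finset.range N, (c * u j - u j * c)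

theorem commSum_succ (u : ℕ → A) (c : A) (N : ℕ) :
    commSum u c (N + 1) = commSum u c N + (c * u N - u N * c) := by
  rw [commSum, commSum, Finset.sum_range_succ]

theorem commSum_comm (u : ℕ → A) (c : A) (k : ℕ)
    (h : ∀ j, j < k → (c * u j - u j * c) * u k = u k * (c * u j - u j * c)) :
    commSum u c k * u k = u k * commSum u c k := by
  unfold commSum
  rw [Finset.sum_mul, Finset.mul_sum]
  exact Finset.sum_congr rfl fun j hj => h j (Finset.mem_range.1 hj)

/-- Moving `c` through the increasing product only adds `x` times the sum of commutators:
there are no terms of higher order in `x`. -/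
theorem mul_incProd (u : ℕ → A) (c : A) (x : R) (N : ℕ)
    (h1 : ∀ k, u k * u k = 0) (h2 : ∀ k, k < N → u k * (c * u k) = 0)
    (h3 : ∀ j k, j < k → k < N →
      (c * u j - u j * c) * u k = u k * (c * u j - u j * c)) :
    ∀ k ≤ N, c * incProd u x k = incProd u x k * (c + x • commSum u c k) := by
  intro k
  induction k with
  | zero => intro _; simp [incProd, commSum]
  | succ k ih =>
    intro hk
    have hD := commSum_comm u c k (fun j hj => h3 j k hj hk)
    have hsq : u k * (u k * c) = 0 := by rw [← mul_assoc, h1, zero_mul]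
    rw [incProd, ← mul_assoc, ih (by omega), mul_assoc, mul_assoc, commSum_succ]
    congr 1
    simp only [mul_add, add_mul, mul_sub, smul_mul_assoc, mul_smul_comm, smul_add, smul_sub,
      mul_one, one_mul, hD, h2 k hk, hsq, smul_zero]
    module

/-- Moving `c` through the decreasing product: the mirror image of `mul_incProd`. -/
theorem decProd_mul (u : ℕ → A) (c : A) (y : R) (N : ℕ)
    (h1 : ∀ k, u k * u k = 0) (h2 : ∀ k, k < N → u k * (c * u k) = 0)
    (h3 : ∀ j k, j < k → k < N →
      (c * u j - u j * c) * u k = u k * (c * u j - u j * c)) :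
    ∀ k ≤ N, decProd u y k * c = (c - y • commSum u c k) * decProd u y k := by
  intro k
  induction k with
  | zero => intro _; simp [decProd, commSum]
  | succ k ih =>
    intro hk
    have hD := commSum_comm u c k (fun j hj => h3 j k hj hk)
    have hsq : c * u k * u k = 0 := by rw [mul_assoc, h1, mul_zero]
    have h2' : u k * c * u k = 0 := by rw [mul_assoc, h2 k hk]
    rw [decProd, mul_assoc, ih (by omega), ← mul_assoc, ← mul_assoc, commSum_succ]
    congr 1
    simp only [mul_add, add_mul, mul_sub, sub_mul, smul_mul_assoc, mul_smul_comm, smul_add,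
      smul_sub, mul_one, one_mul, hD, h2', hsq, smul_zero]
    module

/-- The increasing and the decreasing product commute.  In the inductive step, with `c = u N`,
both sides expand to `E H + (x + y) E c H`, because `c` passes through `E` and `H` up to the
same commutator sum, with opposite signs. -/
theorem incProd_decProd_comm (u : ℕ → A) (x y : R)
    (h1 : ∀ k, u k * u k = 0) (h2 : ∀ k N, k < N → u k * (u N * u k) = 0)
    (h3 : ∀ j k N, j < k → k < N →
      (u N * u j - u j * u N) * u k = u k * (u N * u j - u j * u N))
    (h4 : ∀ N, u N * (incProd u x N * (decProd u y N * u N)) = 0) (N : ℕ) :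
    incProd u x N * decProd u y N = decProd u y N * incProd u x N := by
  induction N with
  | zero => simp [incProd, decProd]
  | succ N ih =>
    have hE := mul_incProd u (u N) x N h1 (fun k hk => h2 k N hk)
      (fun j k hj hk => h3 j k N hj hk) N le_rfl
    have hH := decProd_mul u (u N) y N h1 (fun k hk => h2 k N hk)
      (fun j k hj hk => h3 j k N hj hk) N le_rfl
    have h4N := h4 N
    rw [incProd, decProd]
    set E := incProd u x N
    set H := decProd u y N
    set c := u N
    set D := commSum u c N
    have hcc : c * c = 0 := h1 N
    have e1 : E * (1 + x • c) * ((1 + y • c) * H)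
        = E * H + x • (E * (c * H)) + y • (E * (c * H)) := by
      have : c * (c * H) = 0 := by rw [← mul_assoc, hcc, zero_mul]
      simp only [mul_add, add_mul, mul_one, one_mul, smul_mul_assoc, mul_smul_comm, smul_add,
        mul_assoc, this, mul_zero, smul_zero]
      module
    have e2 : (1 + y • c) * H * (E * (1 + x • c))
        = E * H + x • (E * (H * c)) + y • (c * E * H) := by
      have a : (1 + y • c) * H * (E * (1 + x • c))
        = (1 + y • c) * (E * H) * (1 + x • c) := by rw [ih]; simp only [mul_assoc]
      rw [a]
      simp only [mul_add, add_mul, mul_one, one_mul, smul_mul_assoc, mul_smul_comm, smul_add,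
        mul_assoc, h4N, smul_zero]
      module
    rw [e1, e2, hE, hH]
    simp only [mul_add, add_mul, mul_sub, sub_mul, smul_mul_assoc, mul_smul_comm, smul_add,
      smul_sub, mul_assoc]
    module

end Algebra

/-! ### Ribbon operators on bead configurations -/

section Beads

/-- The bead configuration from which `S` arises by moving a bead from `i` to `i + n`. -/
def unmove (n : ℕ) (i : ℤ) (S : ℤ → Bool) : ℤ → Bool :=
  fun k => if k = i then true else if k = i + n then false else S k

/-- The number of beads of `S` strictly between `i` and `i + n`. -/
noncomputable def beadsBetween (n : ℕ) (i : ℤ) (S : ℤ → Bool) : ℕ :=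
  ((Finset.Ioo i (i + n)).filter fun k => S k = true).card

/-- A bead can be moved back from `i + n` to `i`. -/
def CanUnmove (n : ℕ) (i : ℤ) (S : ℤ → Bool) : Prop :=
  S i = false ∧ S (i + n) = true

instance (n : ℕ) (i : ℤ) (S : ℤ → Bool) : Decidable (CanUnmove n i S) :=
  inferInstanceAs (Decidable (_ ∧ _))

theorem beadsBetween_far {n : ℕ} {i j : ℤ} (S : ℤ → Bool)
    (h1 : j ∉ Finset.Ioo i (i + n)) (h2 : j + n ∉ Finset.Ioo i (i + n)) :
    beadsBetween n i (unmove n j S) = beadsBetween n i S := by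
  unfold beadsBetween
  congr 1
  apply Finset.filter_congr
  intro k hk
  have a : k ≠ j := fun h => h1 (h ▸ hk)
  have b : k ≠ j + n := fun h => h2 (h ▸ hk)
  simp [unmove, a, b]

theorem beadsBetween_right {n : ℕ} {i j : ℤ} {S : ℤ → Bool} (h1 : i < j) (h2 : j < i + n)
    (hS : S j = false) :
    beadsBetween n i (unmove n j S) = beadsBetween n i S + 1 := by
  unfold beadsBetween
  rw [← Finset.card_insert_of_notMem (a := j) (by simp [hS])]
  congr 1
  ext k
  simp only [Finset.mem_filter, Finset.mem_Ioo, Finset.mem_insert, unmove]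
  grind

theorem beadsBetween_left {n : ℕ} {i j : ℤ} {S : ℤ → Bool} (h1 : i < j) (h2 : j < i + n)
    (hS : S (i + n) = true) :
    beadsBetween n j S = beadsBetween n j (unmove n i S) + 1 := by
  unfold beadsBetween
  rw [← Finset.card_insert_of_notMem (a := i + n) (by simp [unmove]; omega)]
  congr 1
  ext k
  simp only [Finset.mem_filter, Finset.mem_Ioo, Finset.mem_insert, unmove]
  grind

theorem unmove_comm {n : ℕ} {i j : ℤ} (S : ℤ → Bool) (h1 : i ≠ j + n) (h2 : j ≠ i + n) :
    unmove n i (unmove n j S) = unmove n j (unmove n i S) := by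
  funext k
  simp only [unmove]
  grind

variable {R : Type*} [CommRing R]

/-- The ribbon operator `u_i`, acting on functions of bead configurations: it moves a bead from
`i` to `i + n`, weighted by `q` to the number of beads jumped over.  The value of `u_i f` at `S`
is given in terms of the configuration before the move. -/
noncomputable def ribOp (q : R) (n : ℕ) (i : ℤ) : Module.End R ((ℤ → Bool) → R) where
  toFun f S := if CanUnmove n i S then q ^ beadsBetween n i S * f (unmove n i S) else 0
  map_add' f g := by
    funext S; by_cases h : CanUnmove n i S <;> simp [h, mul_add]
  map_smul' r f := by
    funext S; by_cases h : CanUnmove n i S <;> simp [h]; ring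

theorem ribOp_apply (q : R) (n : ℕ) (i : ℤ) (f : (ℤ → Bool) → R) (S : ℤ → Bool) :
    ribOp q n i f S =
      if CanUnmove n i S then q ^ beadsBetween n i S * f (unmove n i S) else 0 := rfl

theorem canUnmove_unmove {n : ℕ} {i j : ℤ} (S : ℤ → Bool) (h0 : i ≠ j) (h1 : i ≠ j + n)
    (h2 : j ≠ i + n) : CanUnmove n i (unmove n j S) ↔ CanUnmove n i S := by
  unfold CanUnmove unmove
  grind

theorem ribOp_far (q : R) {n : ℕ} {i j : ℤ} (h : i + n < j) :
    ribOp q n j * ribOp q n i = ribOp q n i * ribOp q n j := by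
  refine LinearMap.ext fun f => funext fun S => ?_
  simp only [Module.End.mul_apply, ribOp_apply]
  simp only [canUnmove_unmove (n := n) (i := i) (j := j) S (by omega) (by omega) (by omega),
    canUnmove_unmove (n := n) (i := j) (j := i) S (by omega) (by omega) (by omega)]
  rw [unmove_comm S (by omega) (by omega),
    beadsBetween_far S (by simp; omega) (by simp; omega),
    beadsBetween_far S (by simp; omega) (by simp; omega)]
  split_ifs <;> ring

theorem ribOp_near (q : R) {n : ℕ} {i j : ℤ} (h : i < j) (h' : j < i + n) :
    ribOp q n j * ribOp q n i = q ^ 2 • (ribOp q n i * ribOp q n j) := by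
  refine LinearMap.ext fun f => funext fun S => ?_
  simp only [Module.End.mul_apply, LinearMap.smul_apply, Pi.smul_apply, smul_eq_mul, ribOp_apply]
  simp only [canUnmove_unmove (n := n) (i := i) (j := j) S (by omega) (by omega) (by omega),
    canUnmove_unmove (n := n) (i := j) (j := i) S (by omega) (by omega) (by omega)]
  rw [unmove_comm S (by omega) (by omega)]
  by_cases hi : CanUnmove n i S
  · by_cases hj : CanUnmove n j S
    · simp only [hi, hj, if_true]
      rw [beadsBetween_right h h' hj.1, beadsBetween_left h h' hi.2]
      ring
    · simp [hi, hj]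
  · simp [hi]

theorem ribOp_sq (q : R) {n : ℕ} (i : ℤ) : ribOp q n i * ribOp q n i = 0 := by
  refine LinearMap.ext fun f => funext fun S => ?_
  have : ¬ CanUnmove n i (unmove n i S) := by simp [CanUnmove, unmove]
  simp [Module.End.mul_apply, ribOp_apply, this]

theorem ribOp_braid (q : R) {n : ℕ} (hn : 1 ≤ n) {i j : ℤ} (h : i < j) :
    ribOp q n i * (ribOp q n j * ribOp q n i) = 0 := by
  refine LinearMap.ext fun f => funext fun S => ?_
  have : ¬ CanUnmove n i (unmove n j (unmove n i S)) := by
    simp only [CanUnmove, unmove]; grind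
  simp [Module.End.mul_apply, ribOp_apply, this]

/-- The commutator of two ribbon operators commutes with every ribbon operator in between: it
vanishes if the two are more than `n` apart, and otherwise each operator in between commutes with
both up to factors `q ^ 2`, which cancel. -/
theorem ribOp_commutator [IsDomain R] {q : R} (hq : q ≠ 0) {n : ℕ} {j k m : ℤ}
    (hjk : j < k) (hkm : k < m) :
    (ribOp q n m * ribOp q n j - ribOp q n j * ribOp q n m) * ribOp q n k =
      ribOp q n k * (ribOp q n m * ribOp q n j - ribOp q n j * ribOp q n m) := by
  rcases lt_trichotomy (j + n) m with h | h | h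
  · rw [ribOp_far q h]; simp
  · have a := ribOp_near q hjk (n := n) (by omega)
    have b := ribOp_near q hkm (n := n) (by omega)
    rw [sub_mul, mul_sub]
    congr 1
    · -- both sides agree after multiplication by `q ^ 2`
      have hc : q ^ 2 • (ribOp q n m * ribOp q n j * ribOp q n k) =
          q ^ 2 • (ribOp q n k * (ribOp q n m * ribOp q n j)) := by
        rw [mul_assoc, ← mul_smul_comm, ← a, ← mul_assoc, b, smul_mul_assoc, mul_assoc]
      refine LinearMap.ext fun f => funext fun S => ?_
      have := congrFun (LinearMap.congr_fun hc f) S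
      simp only [LinearMap.smul_apply, Pi.smul_apply, smul_eq_mul] at this
      exact mul_left_cancel₀ (pow_ne_zero 2 hq) this
    · rw [mul_assoc, b, mul_smul_comm, ← mul_assoc, ← mul_assoc, a, smul_mul_assoc]
  · have a := ribOp_near q hjk (n := n) (by omega)
    have b := ribOp_near q hkm (n := n) (by omega)
    have c := ribOp_near q (hjk.trans hkm) h
    rw [c, sub_mul, mul_sub]
    congr 1
    · rw [smul_mul_assoc, mul_smul_comm, mul_assoc, b, mul_smul_comm, ← mul_assoc, ← mul_assoc,
        a, smul_mul_assoc]
    · rw [mul_assoc, b, mul_smul_comm, ← mul_assoc, ← mul_assoc, a, smul_mul_assoc]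

/-- Functions that vanish on every configuration without a bead at `m`. -/
def BeadAt (m : ℤ) (f : (ℤ → Bool) → R) : Prop := ∀ S, S m = false → f S = 0

theorem beadAt_ribOp_self (q : R) {n : ℕ} (m : ℤ) (f : (ℤ → Bool) → R) :
    BeadAt (m + n) (ribOp q n m f) := by
  intro S hS
  rw [ribOp_apply, if_neg]
  simp [CanUnmove, hS]

theorem ribOp_beadAt (q : R) {n : ℕ} (hn : 1 ≤ n) {m : ℤ} {f : (ℤ → Bool) → R}
    (hf : BeadAt (m + n) f) : ribOp q n m f = 0 := by
  funext S
  rw [ribOp_apply, hf (unmove n m S)]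
  · simp
  · simp only [unmove]; grind

theorem beadAt_factor (q x : R) {n : ℕ} {i m : ℤ} (hi : i < m) {f : (ℤ → Bool) → R}
    (hf : BeadAt (m + n) f) : BeadAt (m + n) ((1 + x • ribOp q n i) f) := by
  intro S hS
  simp only [LinearMap.add_apply, Module.End.one_apply, LinearMap.smul_apply, Pi.add_apply,
    Pi.smul_apply, smul_eq_mul, ribOp_apply]
  rw [hf S hS, hf (unmove n i S)]
  · simp
  · simp only [unmove]; grind

/-- The operators adding horizontal and vertical strips, within a window of contents, commute. -/
theorem ribOp_prod_comm [IsDomain R] {q : R} (hq : q ≠ 0) {n : ℕ} (hn : 1 ≤ n) (K : ℤ)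
    (x y : R) (N : ℕ) :
    incProd (fun m : ℕ => ribOp q n (m - K)) x N * decProd (fun m : ℕ => ribOp q n (m - K)) y N =
    decProd (fun m : ℕ => ribOp q n (m - K)) y N * incProd (fun m : ℕ => ribOp q n (m - K)) x N := by
  apply incProd_decProd_comm
  · exact fun k => ribOp_sq q _
  · exact fun k N h => ribOp_braid q hn (by omega)
  · exact fun j k N h h' => ribOp_commutator hq (by omega) (by omega)
  · -- the last move puts a bead at `N - K + n`, which no `u_m` with `m < N - K` can remove
    intro N
    refine LinearMap.ext fun f => ?_
    simp only [Module.End.mul_apply, LinearMap.zero_apply]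
    apply ribOp_beadAt q hn
    have hdec : ∀ k ≤ N, ∀ g : (ℤ → Bool) → R, BeadAt ((N : ℤ) - K + n) g →
        BeadAt ((N : ℤ) - K + n) (decProd (fun m : ℕ => ribOp q n (m - K)) y k g) := by
      intro k
      induction k with
      | zero => intro _ g hg; simpa [decProd] using hg
      | succ k ih =>
        intro hk g hg
        rw [decProd, Module.End.mul_apply]
        exact beadAt_factor q y (by omega) (ih (by omega) g hg)
    have hinc : ∀ k ≤ N, ∀ g : (ℤ → Bool) → R, BeadAt ((N : ℤ) - K + n) g →
        BeadAt ((N : ℤ) - K + n) (incProd (fun m : ℕ => ribOp q n (m - K)) x k g) := by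
      intro k
      induction k with
      | zero => intro _ g hg; simpa [incProd] using hg
      | succ k ih =>
        intro hk g hg
        rw [incProd, Module.End.mul_apply]
        exact ih (by omega) _ (beadAt_factor q x (by omega) hg)
    exact hinc N le_rfl _ (hdec N le_rfl _ (beadAt_ribOp_self q _ f))

end Beads

/-! ### Young diagrams as bead configurations -/

section Young

theorem exists_notMem_diagonal (lam : YoungDiagram) (k : ℤ) :
    ∃ j : ℕ, (j + (-k).toNat, j + k.toNat) ∉ lam := by
  refine ⟨lam.rowLen 0, fun h => ?_⟩
  have h' : (0, lam.rowLen 0) ∈ lam := lam.up_left_mem (Nat.zero_le _) (Nat.le_add_right _ _) h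
  rw [YoungDiagram.mem_iff_lt_rowLen] at h'
  exact lt_irrefl _ h'

open scoped Classical in
/-- The column of the first cell of content `k` (column minus row) outside `lam`. -/
noncomputable def diagCol (lam : YoungDiagram) (k : ℤ) : ℤ :=
  (Nat.find (exists_notMem_diagonal lam k) : ℤ) + k.toNat

theorem mem_iff_lt_diagCol (lam : YoungDiagram) (r c : ℕ) :
    (r, c) ∈ lam ↔ (c : ℤ) < diagCol lam ((c : ℤ) - r) := by
  classical
  have hr : min r c + (-((c : ℤ) - r)).toNat = r := by omega
  have hc : min r c + ((c : ℤ) - r).toNat = c := by omega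
  have hspec := Nat.find_spec (exists_notMem_diagonal lam ((c : ℤ) - r))
  unfold diagCol
  constructor
  · intro h
    by_contra hlt
    apply hspec
    refine lam.up_left_mem ?_ ?_ h <;> omega
  · intro h
    have hm : min r c < Nat.find (exists_notMem_diagonal lam ((c : ℤ) - r)) := by omega
    have := Nat.find_min (exists_notMem_diagonal lam ((c : ℤ) - r)) hm
    rw [hr, hc, not_not] at this
    exact this

theorem max_le_diagCol (lam : YoungDiagram) (k : ℤ) : 0 ≤ diagCol lam k ∧ k ≤ diagCol lam k := by
  unfold diagCol; omega

theorem mem_iff_of_eq (lam : YoungDiagram) {r c : ℕ} {k : ℤ} (h : (c : ℤ) - r = k) :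
    (r, c) ∈ lam ↔ (c : ℤ) < diagCol lam k := by
  rw [mem_iff_lt_diagCol, h]

theorem diagCol_step (lam : YoungDiagram) (k : ℤ) :
    diagCol lam (k + 1) = diagCol lam k ∨ diagCol lam (k + 1) = diagCol lam k + 1 := by
  have h0 := max_le_diagCol lam k
  have h1 := max_le_diagCol lam (k + 1)
  have hle : diagCol lam k ≤ diagCol lam (k + 1) := by
    by_contra hlt
    have ha := (mem_iff_of_eq lam (r := (diagCol lam k - 1 - k).toNat)
      (c := (diagCol lam k - 1).toNat) (k := k) (by omega)).2 (by omega)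
    have hb : ((diagCol lam k - 2 - k).toNat, (diagCol lam k - 1).toNat) ∈ lam :=
      lam.up_left_mem (by omega) le_rfl ha
    rw [mem_iff_of_eq lam (k := k + 1) (by omega)] at hb
    omega
  have hge : diagCol lam (k + 1) ≤ diagCol lam k + 1 := by
    by_contra hlt
    have ha := (mem_iff_of_eq lam (r := (diagCol lam k - k).toNat)
      (c := (diagCol lam k + 1).toNat) (k := k + 1) (by omega)).2 (by omega)
    have hb : ((diagCol lam k - k).toNat, (diagCol lam k).toNat) ∈ lam :=
      lam.up_left_mem le_rfl (by omega) ha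
    rw [mem_iff_of_eq lam (k := k) (by omega)] at hb
    omega
  omega

theorem diagCol_step' (lam : YoungDiagram) (k : ℤ) :
    diagCol lam k = diagCol lam (k - 1) ∨ diagCol lam k = diagCol lam (k - 1) + 1 := by
  simpa using diagCol_step lam (k - 1)

theorem diagCol_large (lam : YoungDiagram) :
    ∃ K : ℤ, 0 ≤ K ∧ (∀ k, K ≤ k → diagCol lam k = k) ∧ (∀ k, k ≤ -K → diagCol lam k = 0) := by
  refine ⟨max (lam.rowLen 0) (lam.colLen 0), by omega, fun k hk => ?_, fun k hk => ?_⟩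
  · have h := max_le_diagCol lam k
    have h' : (0, k.toNat) ∉ lam := by
      rw [YoungDiagram.mem_iff_lt_rowLen]; omega
    rw [mem_iff_of_eq lam (k := k) (by omega)] at h'
    omega
  · have h := max_le_diagCol lam k
    have h' : ((-k).toNat, 0) ∉ lam := by
      rw [YoungDiagram.mem_iff_lt_colLen]; omega
    rw [mem_iff_of_eq lam (k := k) (by omega)] at h'
    omega

theorem diagCol_mono {μ ν : YoungDiagram} (h : μ ≤ ν) (k : ℤ) : diagCol μ k ≤ diagCol ν k := by
  by_contra hlt
  have h0 := max_le_diagCol ν k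
  have ha := (mem_iff_of_eq μ (r := (diagCol ν k - k).toNat)
      (c := (diagCol ν k).toNat) (k := k) (by omega)).2 (by omega)
  have hb := h ha
  rw [mem_iff_of_eq ν (k := k) (by omega)] at hb
  omega

theorem eq_of_diagCol_eq {μ ν : YoungDiagram} (h : ∀ k, diagCol μ k = diagCol ν k) : μ = ν := by
  apply SetLike.ext
  rintro ⟨r, c⟩
  rw [mem_iff_lt_diagCol, mem_iff_lt_diagCol, h]

/-- The bead configuration of a Young diagram: the boundary of `lam`, read along the diagonals,
has a bead at `k` when it makes a vertical step between the contents `k - 1` and `k`. -/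
noncomputable def beads (lam : YoungDiagram) : ℤ → Bool :=
  fun k => decide (diagCol lam k = diagCol lam (k - 1))

theorem beads_true {lam : YoungDiagram} {k : ℤ} :
    beads lam k = true ↔ diagCol lam k = diagCol lam (k - 1) := by simp [beads]

theorem beads_false {lam : YoungDiagram} {k : ℤ} :
    beads lam k = false ↔ diagCol lam k = diagCol lam (k - 1) + 1 := by
  have := diagCol_step' lam k
  simp only [beads, decide_eq_false_iff_not]
  omega

theorem beads_injective : Function.Injective beads := by
  intro μ ν h
  obtain ⟨K, hK0, -, hK⟩ := diagCol_large μ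
  obtain ⟨K', hK0', -, hK'⟩ := diagCol_large ν
  apply eq_of_diagCol_eq
  have key : ∀ m : ℕ, diagCol μ (-(K + K') + m) = diagCol ν (-(K + K') + m) := by
    intro m
    induction m with
    | zero => rw [hK _ (by omega), hK' _ (by omega)]
    | succ m ih =>
      have hb := congrFun h (-(K + K') + m + 1)
      have e1 := diagCol_step μ (-(K + K') + m)
      have e2 := diagCol_step ν (-(K + K') + m)
      rw [Bool.eq_iff_iff, beads_true, beads_true] at hb
      simp only [add_sub_cancel_right] at hb
      push_cast
      rw [← add_assoc]
      omega
  intro k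
  rcases le_total k (-(K + K')) with hk | hk
  · rw [hK _ (by omega), hK' _ (by omega)]
  · have := key (k + (K + K')).toNat
    rwa [show -(K + K') + ((k + (K + K')).toNat : ℤ) = k by omega] at this

/-- `t` is a ribbon with one cell of each content `i, …, i + n - 1`, the cell of content `k`
lying in column `g k`, where `g` weakly increases by steps of at most one. -/
def RibWith (n : ℕ) (i : ℤ) (g : ℤ → ℤ) (t : Finset (ℕ × ℕ)) : Prop :=
  (∀ k, i ≤ k → k + 1 < i + n → g (k + 1) = g k ∨ g (k + 1) = g k + 1) ∧
  (∀ k, i ≤ k → k < i + n → 0 ≤ g k ∧ k ≤ g k) ∧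
  ∀ r c : ℕ, (r, c) ∈ t ↔ i ≤ (c : ℤ) - r ∧ (c : ℤ) - r < i + n ∧ (c : ℤ) = g ((c : ℤ) - r)

/-- `t` is a ribbon occupying the contents `i, …, i + n - 1`. -/
def RibAt (n : ℕ) (i : ℤ) (t : Finset (ℕ × ℕ)) : Prop := ∃ g, RibWith n i g t

theorem mem_sdiff_cells {μ ν : YoungDiagram} {x : ℕ × ℕ} :
    x ∈ ν.cells \ μ.cells ↔ x ∈ ν ∧ x ∉ μ := by
  simp [Finset.mem_sdiff, YoungDiagram.mem_cells]

/-- A cell of the ribbon with prescribed content. -/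
theorem RibWith.cell {n : ℕ} {i : ℤ} {g : ℤ → ℤ} {t : Finset (ℕ × ℕ)} (h : RibWith n i g t)
    {k : ℤ} (hk : i ≤ k) (hk' : k < i + n) : ((g k - k).toNat, (g k).toNat) ∈ t := by
  have := h.2.1 k hk hk'
  rw [h.2.2]
  have e : (((g k).toNat : ℤ) - ((g k - k).toNat : ℤ)) = k := by omega
  rw [e]; omega

theorem diagCol_of_ribAt {n : ℕ} {i : ℤ} {μ ν : YoungDiagram} (hle : μ ≤ ν)
    (h : RibAt n i (ν.cells \ μ.cells)) (k : ℤ) :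
    diagCol ν k = diagCol μ k + if i ≤ k ∧ k < i + n then 1 else 0 := by
  obtain ⟨g, hg⟩ := h
  have hm := diagCol_mono hle k
  have h0 := max_le_diagCol μ k
  -- every column between the two boundaries on the diagonal `k` carries a cell of the ribbon
  have key : ∀ c : ℤ, diagCol μ k ≤ c → c < diagCol ν k → i ≤ k ∧ k < i + n ∧ c = g k := by
    intro c h1 h2
    have hmem : ((c - k).toNat, c.toNat) ∈ ν.cells \ μ.cells := by
      rw [mem_sdiff_cells, mem_iff_of_eq ν (k := k) (by omega),
        mem_iff_of_eq μ (k := k) (by omega)]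
      omega
    rw [hg.2.2] at hmem
    have e : ((c.toNat : ℤ) - ((c - k).toNat : ℤ)) = k := by omega
    rw [e] at hmem
    omega
  split_ifs with hk
  · have hc := hg.cell hk.1 hk.2
    have h0' := hg.2.1 k hk.1 hk.2
    rw [mem_sdiff_cells, mem_iff_of_eq ν (k := k) (by omega),
        mem_iff_of_eq μ (k := k) (by omega)] at hc
    have a := key (diagCol μ k) le_rfl (by omega)
    by_contra hne
    have b := key (diagCol μ k + 1) (by omega) (by omega)
    omega
  · by_contra hne
    have b := key (diagCol μ k) (by omega) (by omega)
    exact hk ⟨b.1, b.2.1⟩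

theorem ribWith_of_diagCol {n : ℕ} {i : ℤ} {μ ν : YoungDiagram}
    (h : ∀ k, diagCol ν k = diagCol μ k + if i ≤ k ∧ k < i + n then 1 else 0) :
    RibWith n i (diagCol μ) (ν.cells \ μ.cells) := by
  refine ⟨fun k _ _ => diagCol_step μ k, fun k _ _ => max_le_diagCol μ k, fun r c => ?_⟩
  rw [mem_sdiff_cells, mem_iff_lt_diagCol, mem_iff_lt_diagCol, h]
  split_ifs with hk <;> omega

/-- Adding a ribbon with leftmost content `i` moves a bead from `i` to `i + n`. -/
theorem beads_of_ribAt {n : ℕ} (hn : 1 ≤ n) {i : ℤ} {μ ν : YoungDiagram} (hle : μ ≤ ν)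
    (h : RibAt n i (ν.cells \ μ.cells)) :
    CanUnmove n i (beads ν) ∧ beads μ = unmove n i (beads ν) := by
  have hd := diagCol_of_ribAt hle h
  have hi := hd i
  have hi1 := hd (i - 1)
  have hj := hd (i + n)
  have hj1 := hd (i + n - 1)
  rw [if_pos (by omega)] at hi hj1
  rw [if_neg (by omega)] at hi1 hj
  have si := diagCol_step' μ i
  have sj := diagCol_step' μ (i + n)
  have si' := diagCol_step' ν i
  have sj' := diagCol_step' ν (i + n)
  refine ⟨⟨beads_false.2 (by omega), beads_true.2 (by omega)⟩, ?_⟩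
  funext k
  unfold unmove
  split_ifs with h1 h2
  · subst h1; exact beads_true.2 (by omega)
  · subst h2; exact beads_false.2 (by omega)
  · rw [Bool.eq_iff_iff, beads_true, beads_true, hd k, hd (k - 1)]
    split_ifs <;> omega

theorem isLowerSet_of_neighbors {s : Set (ℕ × ℕ)} (h1 : ∀ r c, (r + 1, c) ∈ s → (r, c) ∈ s)
    (h2 : ∀ r c, (r, c + 1) ∈ s → (r, c) ∈ s) : IsLowerSet s := by
  have a : ∀ d r c, (r + d, c) ∈ s → (r, c) ∈ s := by
    intro d
    induction d with
    | zero => intro r c h; exact h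
    | succ d ih => intro r c h; exact ih r c (h1 _ _ h)
  have b : ∀ d r c, (r, c + d) ∈ s → (r, c) ∈ s := by
    intro d
    induction d with
    | zero => intro r c h; exact h
    | succ d ih => intro r c h; exact ih r c (h2 _ _ h)
  rintro ⟨r', c'⟩ ⟨r, c⟩ ⟨hr, hc⟩ hm
  simp only at hr hc
  obtain ⟨d, rfl⟩ := Nat.exists_eq_add_of_le hr
  obtain ⟨e, rfl⟩ := Nat.exists_eq_add_of_le hc
  exact b e _ _ (a d _ _ hm)

/-- If a bead of `ν` can move back from `i + n` to `i`, a ribbon can be removed from `ν`. -/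
theorem exists_unmove {n : ℕ} (hn : 1 ≤ n) {i : ℤ} {ν : YoungDiagram}
    (h : CanUnmove n i (beads ν)) :
    ∃ μ : YoungDiagram, μ ≤ ν ∧ RibAt n i (ν.cells \ μ.cells) := by
  classical
  have h1 := beads_false.1 h.1
  have h2 := beads_true.1 h.2
  set D : ℤ → ℤ := fun k => diagCol ν k - if i ≤ k ∧ k < i + n then 1 else 0 with hD
  have hstep : ∀ k, D (k + 1) = D k ∨ D (k + 1) = D k + 1 := by
    intro k
    have hs := diagCol_step ν k
    simp only [hD]
    by_cases e1 : k + 1 = i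
    · obtain rfl : i = k + 1 := e1.symm
      rw [add_sub_cancel_right] at h1
      split_ifs <;> omega
    · by_cases e2 : k + 1 = i + n
      · rw [← e2, add_sub_cancel_right] at h2
        split_ifs <;> omega
      · split_ifs <;> omega
  obtain ⟨K, hK0, hKp, hKm⟩ := diagCol_large ν
  -- `D` is weakly increasing and vanishes far to the left
  have hnonneg : ∀ k, 0 ≤ D k := by
    have base : ∀ k, k ≤ -K → k < i → 0 ≤ D k := by
      intro k hk hk'
      simp only [hD]
      rw [hKm k hk, if_neg (by omega)]; omega
    have up : ∀ m : ℕ, 0 ≤ D (min (-K) (i - 1) + m) := by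
      intro m
      induction m with
      | zero => exact base _ (by simp) (by simp)
      | succ m ih =>
        have := hstep (min (-K) (i - 1) + m)
        push_cast
        rw [← add_assoc]; omega
    intro k
    by_cases hk : k ≤ min (-K) (i - 1)
    · exact base k (by omega) (by omega)
    · have := up (k - min (-K) (i - 1)).toNat
      rwa [show min (-K) (i - 1) + ((k - min (-K) (i - 1)).toNat : ℤ) = k by omega] at this
  -- `D k - k` is weakly decreasing and vanishes far to the right
  have hge : ∀ k, k ≤ D k := by
    have base : ∀ k, K ≤ k → i + n ≤ k → k ≤ D k := by
      intro k hk hk'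
      simp only [hD]
      rw [hKp k hk, if_neg (by omega)]; omega
    have down : ∀ m : ℕ, max K (i + n) - m ≤ D (max K (i + n) - m) := by
      intro m
      induction m with
      | zero => exact base _ (by simp) (by simp)
      | succ m ih =>
        have := hstep (max K (i + n) - (m + 1 : ℕ))
        rw [show max K (i + n) - ((m + 1 : ℕ) : ℤ) + 1 = max K (i + n) - m by push_cast; ring]
          at this
        push_cast at *
        omega
    intro k
    by_cases hk : max K (i + n) ≤ k
    · exact base k (by omega) (by omega)
    · have := down (max K (i + n) - k).toNat
      rwa [show max K (i + n) - ((max K (i + n) - k).toNat : ℤ) = k by omega] at this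
  let μ : YoungDiagram :=
    { cells := ν.cells.filter fun x => (x.2 : ℤ) < D ((x.2 : ℤ) - x.1)
      isLowerSet := by
        apply isLowerSet_of_neighbors
        · intro r c hm
          simp only [Finset.coe_filter, Set.mem_ofPred_eq, YoungDiagram.mem_cells] at hm ⊢
          refine ⟨ν.up_left_mem (Nat.le_succ r) le_rfl hm.1, ?_⟩
          have := hstep ((c : ℤ) - (r + 1 : ℕ))
          rw [show (c : ℤ) - ((r + 1 : ℕ) : ℤ) + 1 = c - r by push_cast; ring] at this
          omega
        · intro r c hm
          simp only [Finset.coe_filter, Set.mem_ofPred_eq, YoungDiagram.mem_cells] at hm ⊢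
          refine ⟨ν.up_left_mem le_rfl (Nat.le_succ c) hm.1, ?_⟩
          have := hstep ((c : ℤ) - r)
          rw [show (c : ℤ) - r + 1 = ((c + 1 : ℕ) : ℤ) - r by push_cast; ring] at this
          push_cast at *
          omega }
  have hμ : ∀ r c : ℕ, (r, c) ∈ μ ↔ (c : ℤ) < D ((c : ℤ) - r) := by
    intro r c
    have : (r, c) ∈ μ ↔ (r, c) ∈ ν ∧ (c : ℤ) < D ((c : ℤ) - r) := by
      rw [← YoungDiagram.mem_cells]
      simp [μ, Finset.mem_filter]
    rw [this, mem_iff_lt_diagCol]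
    simp only [hD]
    split_ifs <;> omega
  have hDμ : ∀ k, diagCol μ k = D k := by
    intro k
    have a := max_le_diagCol μ k
    have b := hnonneg k
    have b' := hge k
    rcases lt_trichotomy (diagCol μ k) (D k) with hlt | heq | hgt
    · exfalso
      have e : (((diagCol μ k).toNat : ℤ) - ((diagCol μ k - k).toNat : ℤ)) = k := by omega
      have h3 := hμ (diagCol μ k - k).toNat (diagCol μ k).toNat
      rw [mem_iff_of_eq μ e, e] at h3
      omega
    · exact heq
    · exfalso
      have e : (((D k).toNat : ℤ) - ((D k - k).toNat : ℤ)) = k := by omega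
      have h3 := hμ (D k - k).toNat (D k).toNat
      rw [mem_iff_of_eq μ e, e] at h3
      omega
  refine ⟨μ, ?_, diagCol μ, ribWith_of_diagCol fun k => ?_⟩
  · intro x hx
    rw [← YoungDiagram.mem_cells] at hx
    exact (Finset.mem_filter.1 hx).1
  · rw [hDμ]; simp only [hD]; ring

end Young

/-! ### Ribbons as lattice paths -/

section Ribbons

/-- The content of a cell: column minus row. -/
def content (p : ℕ × ℕ) : ℤ := (p.2 : ℤ) - p.1

theorem Adj.content_eq {p p' : ℕ × ℕ} (h : Adj p p') :
    content p' = content p + 1 ∨ content p = content p' + 1 := by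
  unfold Adj at h; unfold content; omega

/-- A path of adjacent cells attains all intermediate contents, and crosses from each to the
next by an adjacent pair. -/
theorem exists_crossing {t : Finset (ℕ × ℕ)} {c d : ℕ × ℕ}
    (h : Relation.ReflTransGen (fun a b => a ∈ t ∧ b ∈ t ∧ Adj a b) c d) {k : ℤ}
    (hc : content c ≤ k) (hd : k + 1 ≤ content d) :
    ∃ a ∈ t, ∃ b ∈ t, Adj a b ∧ content a = k ∧ content b = k + 1 := by
  induction h with
  | refl => omega
  | @tail d e _ hde ih =>
    obtain ⟨h1, h2, h3⟩ := hde
    by_cases hk : k + 1 ≤ content d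
    · exact ih hk
    · have := h3.content_eq
      exact ⟨d, h1, e, h2, h3, by omega, by omega⟩

theorem content_injOn {t : Finset (ℕ × ℕ)} (hs : IsSkewCells t) (h2 : NoTwoByTwo t)
    {p p' : ℕ × ℕ} (hp : p ∈ t) (hp' : p' ∈ t) (h : content p = content p') : p = p' := by
  obtain ⟨μ, lam, -, rfl⟩ := hs
  have key : ∀ p p' : ℕ × ℕ, p ∈ lam.cells \ μ.cells → p' ∈ lam.cells \ μ.cells →
      content p = content p' → ¬ p.1 < p'.1 := by
    rintro ⟨r, c⟩ ⟨r', c'⟩ hp hp' h hlt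
    simp only [content] at h hlt
    rw [mem_sdiff_cells] at hp hp'
    have between : ∀ a b, r ≤ a → c ≤ b → a ≤ r' → b ≤ c' → (a, b) ∈ lam.cells \ μ.cells := by
      intro a b h1 h2 h3 h4
      rw [mem_sdiff_cells]
      exact ⟨lam.up_left_mem h3 h4 hp'.1, fun hm => hp.2 (μ.up_left_mem h1 h2 hm)⟩
    exact h2 r c ⟨between _ _ (by omega) (by omega) (by omega) (by omega),
      between _ _ (by omega) (by omega) (by omega) (by omega),
      between _ _ (by omega) (by omega) (by omega) (by omega),
      between _ _ (by omega) (by omega) (by omega) (by omega)⟩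
  have a := key p p' hp hp' h
  have b := key p' p hp' hp h.symm
  unfold content at h
  exact Prod.ext (by omega) (by omega)

/-- A ribbon has exactly one cell on each of `n` consecutive diagonals. -/
theorem IsRibbon.exists_ribAt {n : ℕ} (hn : 1 ≤ n) {t : Finset (ℕ × ℕ)} (h : IsRibbon n t) :
    ∃ i, RibAt n i t := by
  classical
  obtain ⟨hcard, hskew, hconn, h2⟩ := h
  have hinj : Set.InjOn content (t : Set (ℕ × ℕ)) :=
    fun p hp p' hp' h => content_injOn hskew h2 hp hp' h
  have hne : t.Nonempty := Finset.card_pos.1 (by omega)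
  obtain ⟨p, hp, hpmin⟩ := t.exists_min_image content hne
  obtain ⟨p', hp', hpmax⟩ := t.exists_max_image content hne
  -- the contents of the cells form an interval
  have himg : t.image content = Finset.Icc (content p) (content p') := by
    ext k
    rw [Finset.mem_image, Finset.mem_Icc]
    constructor
    · rintro ⟨x, hx, rfl⟩; exact ⟨hpmin x hx, hpmax x hx⟩
    · rintro ⟨h1, h3⟩
      rcases eq_or_lt_of_le h3 with h4 | h4
      · exact ⟨p', hp', h4.symm⟩
      · obtain ⟨a, ha, -, -, -, hak, -⟩ := exists_crossing (hconn p hp p' hp') h1 h4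
        exact ⟨a, ha, hak⟩
  have hlen : (content p' + 1 - content p).toNat = n := by
    rw [← Int.card_Icc, ← himg, Finset.card_image_of_injOn hinj, hcard]
  have hend : content p' + 1 = content p + n := by
    have := hpmin p' hp'; omega
  have hex : ∀ k, content p ≤ k → k < content p + n → ∃ x ∈ t, content x = k := by
    intro k h1 h3
    have : k ∈ t.image content := by rw [himg, Finset.mem_Icc]; omega
    simpa using this
  have hcol : ∀ k, ∃ v : ℤ, ∀ x ∈ t, content x = k → (x.2 : ℤ) = v := by
    intro k
    by_cases h : ∃ y ∈ t, content y = k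
    · obtain ⟨y, hy, hyk⟩ := h
      exact ⟨y.2, fun x hx hxk => by rw [hinj hx hy (hxk.trans hyk.symm)]⟩
    · exact ⟨0, fun x hx hxk => absurd ⟨x, hx, hxk⟩ h⟩
  choose g hg using hcol
  refine ⟨content p, g, ?_, ?_, ?_⟩
  · intro k h1 h3
    obtain ⟨x, hx, hxk⟩ := hex k h1 (by omega)
    obtain ⟨y, hy, hyk⟩ := hex (k + 1) (by omega) h3
    obtain ⟨a, ha, b, hb, hab, hak, hbk⟩ :=
      exists_crossing (hconn x hx y hy) hxk.le hyk.ge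
    rw [← hg k a ha hak, ← hg (k + 1) b hb hbk]
    unfold Adj at hab; unfold content at hak hbk
    omega
  · intro k h1 h3
    obtain ⟨x, hx, hxk⟩ := hex k h1 h3
    rw [← hg k x hx hxk]
    unfold content at hxk
    omega
  · intro r c
    constructor
    · intro hm
      have h1 := hpmin _ hm
      have h3 := hpmax _ hm
      have h4 : content (r, c) = (c : ℤ) - r := rfl
      exact ⟨by omega, by omega, hg _ _ hm h4⟩
    · rintro ⟨h1, h3, h4⟩
      obtain ⟨x, hx, hxk⟩ := hex _ h1 h3
      have h5 := hg _ x hx hxk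
      unfold content at hxk
      have : x = (r, c) := by apply Prod.ext <;> simp only <;> omega
      rwa [this] at hx

theorem RibWith.content_bounds {n : ℕ} {i : ℤ} {g : ℤ → ℤ} {t : Finset (ℕ × ℕ)}
    (h : RibWith n i g t) {x : ℕ × ℕ} (hx : x ∈ t) :
    i ≤ content x ∧ content x < i + n ∧ (x.2 : ℤ) = g (content x) :=
  (h.2.2 x.1 x.2).1 hx

theorem RibAt.content_bounds {n : ℕ} {i : ℤ} {t : Finset (ℕ × ℕ)}
    (h : RibAt n i t) {x : ℕ × ℕ} (hx : x ∈ t) : i ≤ content x ∧ content x < i + n := by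
  obtain ⟨g, hg⟩ := h
  exact ⟨(hg.content_bounds hx).1, (hg.content_bounds hx).2.1⟩

theorem RibWith.mono {n : ℕ} {i : ℤ} {g : ℤ → ℤ} {t : Finset (ℕ × ℕ)}
    (h : RibWith n i g t) {k : ℤ} (hk : i ≤ k) (m : ℕ) (hm : k + m < i + n) :
    g k ≤ g (k + m) ∧ g (k + m) ≤ g k + m := by
  induction m with
  | zero => simp
  | succ m ih =>
    have a := ih (by push_cast at hm; omega)
    have b := h.1 (k + m) (by omega) (by push_cast at hm; omega)
    push_cast
    rw [← add_assoc]
    omega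

theorem topRight_eq {t : Finset (ℕ × ℕ)} {p : ℕ × ℕ} (hp : p ∈ t)
    (h : ∀ x ∈ t, p.1 ≤ x.1 ∧ x.2 ≤ p.2) : topRight t = p := by
  have e1 : (t.image Prod.fst).min = (p.1 : WithTop ℕ) := by
    apply le_antisymm
    · exact Finset.min_le (Finset.mem_image_of_mem _ hp)
    · apply Finset.le_min
      intro a ha
      obtain ⟨x, hx, rfl⟩ := Finset.mem_image.1 ha
      exact WithTop.coe_le_coe.2 (h x hx).1
  have e1' : (t.image Prod.fst).min.getD 0 = p.1 := by rw [e1]; rfl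
  have e2 : ((t.filter fun c => c.1 = p.1).image Prod.snd).max = (p.2 : WithBot ℕ) := by
    apply le_antisymm
    · apply Finset.max_le
      intro a ha
      obtain ⟨x, hx, rfl⟩ := Finset.mem_image.1 ha
      exact WithBot.coe_le_coe.2 (h x (Finset.mem_filter.1 hx).1).2
    · exact Finset.le_max (Finset.mem_image_of_mem _ (by simp [hp]))
  unfold topRight
  rw [e1', e2]
  rfl

theorem bottomLeft_eq {t : Finset (ℕ × ℕ)} {p : ℕ × ℕ} (hp : p ∈ t)
    (h : ∀ x ∈ t, x.1 ≤ p.1 ∧ p.2 ≤ x.2) : bottomLeft t = p := by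
  have e1 : (t.image Prod.fst).max = (p.1 : WithBot ℕ) := by
    apply le_antisymm
    · apply Finset.max_le
      intro a ha
      obtain ⟨x, hx, rfl⟩ := Finset.mem_image.1 ha
      exact WithBot.coe_le_coe.2 (h x hx).1
    · exact Finset.le_max (Finset.mem_image_of_mem _ hp)
  have e1' : (t.image Prod.fst).max.getD 0 = p.1 := by rw [e1]; rfl
  have e2 : ((t.filter fun c => c.1 = p.1).image Prod.snd).min = (p.2 : WithTop ℕ) := by
    apply le_antisymm
    · exact Finset.min_le (Finset.mem_image_of_mem _ (by simp [hp]))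
    · apply Finset.le_min
      intro a ha
      obtain ⟨x, hx, rfl⟩ := Finset.mem_image.1 ha
      exact WithTop.coe_le_coe.2 (h x (Finset.mem_filter.1 hx).1).2
  unfold bottomLeft
  rw [e1', e2]
  rfl

theorem RibWith.topRight {n : ℕ} (hn : 1 ≤ n) {i : ℤ} {g : ℤ → ℤ} {t : Finset (ℕ × ℕ)}
    (h : RibWith n i g t) :
    topRight t = ((g (i + n - 1) - (i + n - 1)).toNat, (g (i + n - 1)).toNat) := by
  apply topRight_eq (h.cell (by omega) (by omega))
  intro x hx
  obtain ⟨h1, h2, h3⟩ := h.content_bounds hx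
  have h4 := h.mono h1 (i + n - 1 - content x).toNat (by omega)
  rw [show content x + ((i + n - 1 - content x).toNat : ℤ) = i + n - 1 by omega] at h4
  have h5 : content x = (x.2 : ℤ) - x.1 := rfl
  simp only
  omega

theorem RibWith.bottomLeft {n : ℕ} (hn : 1 ≤ n) {i : ℤ} {g : ℤ → ℤ} {t : Finset (ℕ × ℕ)}
    (h : RibWith n i g t) : bottomLeft t = ((g i - i).toNat, (g i).toNat) := by
  apply bottomLeft_eq (h.cell (by omega) (by omega))
  intro x hx
  obtain ⟨h1, h2, h3⟩ := h.content_bounds hx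
  have h4 := h.mono le_rfl (content x - i).toNat (by omega)
  rw [show i + ((content x - i).toNat : ℤ) = content x by omega] at h4
  have h5 : content x = (x.2 : ℤ) - x.1 := rfl
  have h6 := h.2.1 i le_rfl (by omega)
  simp only
  omega

theorem RibAt.topRight_mem {n : ℕ} (hn : 1 ≤ n) {i : ℤ} {t : Finset (ℕ × ℕ)}
    (h : RibAt n i t) : topRight t ∈ t ∧ content (topRight t) = i + n - 1 := by
  obtain ⟨g, hg⟩ := h
  rw [hg.topRight hn]
  refine ⟨hg.cell (by omega) (by omega), ?_⟩
  have := hg.2.1 (i + n - 1) (by omega) (by omega)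
  simp only [content]; omega

theorem RibAt.bottomLeft_mem {n : ℕ} (hn : 1 ≤ n) {i : ℤ} {t : Finset (ℕ × ℕ)}
    (h : RibAt n i t) : bottomLeft t ∈ t ∧ content (bottomLeft t) = i := by
  obtain ⟨g, hg⟩ := h
  rw [hg.bottomLeft hn]
  refine ⟨hg.cell (by omega) (by omega), ?_⟩
  have := hg.2.1 i (by omega) (by omega)
  simp only [content]; omega

theorem RibAt.unique {n : ℕ} (hn : 1 ≤ n) {i j : ℤ} {t : Finset (ℕ × ℕ)}
    (h : RibAt n i t) (h' : RibAt n j t) : i = j := by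
  rw [← (h.bottomLeft_mem hn).2, (h'.bottomLeft_mem hn).2]

theorem RibWith.image_eq {n : ℕ} {i : ℤ} {g : ℤ → ℤ} {t : Finset (ℕ × ℕ)}
    (h : RibWith n i g t) :
    t = (Finset.Ico i (i + n)).image fun k => ((g k - k).toNat, (g k).toNat) := by
  ext x
  rw [Finset.mem_image]
  constructor
  · intro hx
    obtain ⟨h1, h2, h3⟩ := h.content_bounds hx
    refine ⟨content x, Finset.mem_Ico.2 ⟨h1, h2⟩, ?_⟩
    rw [← h3]
    unfold content
    apply Prod.ext <;> simp
  · rintro ⟨k, hk, rfl⟩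
    rw [Finset.mem_Ico] at hk
    exact h.cell hk.1 hk.2

theorem isRibbon_of_ribAt {n : ℕ} {i : ℤ} {μ ν : YoungDiagram} (hle : μ ≤ ν)
    (h : RibAt n i (ν.cells \ μ.cells)) : IsRibbon n (ν.cells \ μ.cells) := by
  obtain ⟨g, hg⟩ := h
  refine ⟨?_, ⟨μ, ν, hle, rfl⟩, ?_, ?_⟩
  · rw [hg.image_eq, Finset.card_image_of_injOn, Int.card_Ico]
    · omega
    · intro k hk k' hk' he
      simp only [Finset.coe_Ico, Set.mem_Ico] at hk hk'
      have a := hg.2.1 k hk.1 hk.2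
      have b := hg.2.1 k' hk'.1 hk'.2
      simp only [Prod.mk.injEq] at he
      omega
  · set t := ν.cells \ μ.cells
    have hsymm : Std.Symm (fun a b => a ∈ t ∧ b ∈ t ∧ Adj a b) := by
      constructor
      rintro a b ⟨h1, h2, h3⟩
      refine ⟨h2, h1, ?_⟩
      unfold Adj at h3 ⊢; omega
    -- every cell is joined to the cell of content `i`
    have key : ∀ m : ℕ, i + m < i + n →
        Relation.ReflTransGen (fun a b => a ∈ t ∧ b ∈ t ∧ Adj a b)
          ((g i - i).toNat, (g i).toNat)
          ((g (i + m) - (i + m)).toNat, (g (i + m)).toNat) := by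
      intro m
      induction m with
      | zero => intro _; simp only [Nat.cast_zero, add_zero]; exact Relation.ReflTransGen.refl
      | succ m ih =>
        intro hm
        refine (ih (by push_cast at hm; omega)).tail
          ⟨hg.cell (by omega) (by push_cast at hm; omega), hg.cell (by omega) hm, ?_⟩
        push_cast at hm ⊢
        rw [← add_assoc] at hm ⊢
        have a := hg.1 (i + m) (by omega) hm
        have b := hg.2.1 (i + m) (by omega) (by omega)
        have b' := hg.2.1 (i + m + 1) (by omega) (by omega)
        unfold Adj
        simp only
        omega
    have key' : ∀ x ∈ t, Relation.ReflTransGen (fun a b => a ∈ t ∧ b ∈ t ∧ Adj a b)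
          ((g i - i).toNat, (g i).toNat) x := by
      intro x hx
      obtain ⟨h1, h2, h3⟩ := hg.content_bounds hx
      have := key (content x - i).toNat (by omega)
      rw [show i + ((content x - i).toNat : ℤ) = content x by omega, ← h3] at this
      have e : ((((x.2 : ℤ) - content x).toNat, (x.2 : ℤ).toNat) : ℕ × ℕ) = x := by
        unfold content; apply Prod.ext <;> simp
      rwa [e] at this
    intro c hc d hd
    exact (Std.Symm.symm _ _ (key' c hc)).trans (key' d hd)
  · rintro a b ⟨h1, -, -, h4⟩
    rw [hg.2.2] at h1 h4
    rw [show (((b + 1 : ℕ) : ℤ) - ((a + 1 : ℕ) : ℤ)) = (b : ℤ) - a by push_cast; ring] at h4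
    push_cast at h4
    omega

/-- The number of values of a function decreasing by steps of at most one. -/
theorem card_image_steps (f : ℤ → ℕ) (i : ℤ) (m : ℕ)
    (h : ∀ k, i ≤ k → k < i + m → f k = f (k + 1) ∨ f k = f (k + 1) + 1) :
    ((Finset.Ico i (i + m + 1)).image f).card =
      ((Finset.Ioo i (i + m + 1)).filter fun k => f (k - 1) = f k + 1).card + 1 := by
  have hmono : ∀ m' : ℕ, m' ≤ m → ∀ k, i ≤ k → k ≤ i + m' → f (i + m') ≤ f k := by
    intro m'
    induction m' with
    | zero => intro _ k h1 h2; obtain rfl : k = i := by simp at h2; omega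
              simp
    | succ m' ih =>
      intro hm' k h1 h2
      push_cast at h2 ⊢
      rw [← add_assoc] at h2 ⊢
      rcases eq_or_lt_of_le h2 with h3 | h3
      · rw [h3]
      · have := ih (by omega) k h1 (by omega)
        have := h (i + m') (by omega) (by omega)
        omega
  induction m with
  | zero =>
    have e1 : Finset.Ico i (i + (0 : ℕ) + 1) = {i} := by ext; simp; omega
    have e2 : Finset.Ioo i (i + (0 : ℕ) + 1) = ∅ := by ext; simp
    rw [e1, e2]; simp
  | succ m ih =>
    have ih' := ih (fun k h1 h2 => h k h1 (by push_cast; omega))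
      (fun m' hm' => hmono m' (by omega))
    have e1 : Finset.Ico i (i + (m + 1 : ℕ) + 1) = insert (i + m + 1) (Finset.Ico i (i + m + 1)) := by
      ext; simp; omega
    have e2 : Finset.Ioo i (i + (m + 1 : ℕ) + 1) = insert (i + m + 1) (Finset.Ioo i (i + m + 1)) := by
      ext; simp; omega
    rw [e1, e2, Finset.image_insert, Finset.filter_insert]
    have hs := h (i + m) (by omega) (by push_cast; omega)
    rw [add_sub_cancel_right]
    by_cases hstep : f (i + m) = f (i + m + 1) + 1
    · rw [if_pos hstep, Finset.card_insert_of_notMem, Finset.card_insert_of_notMem, ih']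
      · simp
      · rw [Finset.mem_image]
        rintro ⟨k, hk, hk'⟩
        rw [Finset.mem_Ico] at hk
        have := hmono m (by omega) k hk.1 (by omega)
        omega
    · rw [if_neg hstep, Finset.insert_eq_self.2, ih']
      rw [Finset.mem_image]
      exact ⟨i + m, by simp, by omega⟩

/-- The spin of a ribbon is the number of beads jumped over by the corresponding move. -/
theorem spin_of_ribAt {n : ℕ} (hn : 1 ≤ n) {i : ℤ} {μ ν : YoungDiagram} (hle : μ ≤ ν)
    (h : RibAt n i (ν.cells \ μ.cells)) :
    spin (ν.cells \ μ.cells) = beadsBetween n i (beads ν) := by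
  have hd := diagCol_of_ribAt hle h
  have hg := ribWith_of_diagCol hd
  unfold spin beadsBetween
  rw [hg.image_eq, Finset.image_image]
  obtain ⟨m, rfl⟩ : ∃ m, n = m + 1 := ⟨n - 1, by omega⟩
  have := card_image_steps (fun k => (diagCol μ k - k).toNat) i m (by
    intro k h1 h2
    have a := diagCol_step μ k
    have b := max_le_diagCol μ k
    have b' := max_le_diagCol μ (k + 1)
    omega)
  rw [← show i + ((m + 1 : ℕ) : ℤ) = i + m + 1 by push_cast; ring] at this
  change ((Finset.Ico i (i + (m + 1 : ℕ))).image fun k => (diagCol μ k - k).toNat).card - 1 = _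
  rw [this, Nat.add_sub_cancel]
  congr 1
  apply Finset.filter_congr
  intro k hk
  rw [Finset.mem_Ioo] at hk
  rw [beads_true, hd k, hd (k - 1), if_pos (by omega), if_pos (by omega)]
  have a := diagCol_step' μ k
  have b := max_le_diagCol μ k
  have b' := max_le_diagCol μ (k - 1)
  omega

end Ribbons

/-! ### Removing the extreme ribbon of a strip -/

section Removal

/-- Removing from `ν` a set `t` of its cells leaves a Young diagram as soon as `t` is closed under
lower and right neighbours in `ν`. -/
theorem exists_sdiff_of_closed {ν : YoungDiagram} {t : Finset (ℕ × ℕ)} (hsub : ∀ x ∈ t, x ∈ ν)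
    (h1 : ∀ r c, (r, c) ∈ t → (r + 1, c) ∈ ν → (r + 1, c) ∈ t)
    (h2 : ∀ r c, (r, c) ∈ t → (r, c + 1) ∈ ν → (r, c + 1) ∈ t) :
    ∃ κ : YoungDiagram, κ ≤ ν ∧ t = ν.cells \ κ.cells := by
  let κ : YoungDiagram :=
    { cells := ν.cells \ t
      isLowerSet := by
        apply isLowerSet_of_neighbors
        · intro r c h
          simp only [Finset.coe_sdiff, Set.mem_sdiff, Finset.mem_coe, YoungDiagram.mem_cells] at h ⊢
          exact ⟨ν.up_left_mem (Nat.le_succ r) le_rfl h.1, fun h' => h.2 (h1 r c h' h.1)⟩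
        · intro r c h
          simp only [Finset.coe_sdiff, Set.mem_sdiff, Finset.mem_coe, YoungDiagram.mem_cells] at h ⊢
          exact ⟨ν.up_left_mem le_rfl (Nat.le_succ c) h.1, fun h' => h.2 (h2 r c h' h.1)⟩ }
  refine ⟨κ, ?_, ?_⟩
  · intro x hx
    exact (Finset.mem_sdiff.1 (show x ∈ ν.cells \ t from hx)).1
  · ext x
    simp only [κ, Finset.mem_sdiff, YoungDiagram.mem_cells]
    have := hsub x
    tauto

theorem RibWith.ne_of_disjoint {n : ℕ} {i i' : ℤ} {g g' : ℤ → ℤ} {t t' : Finset (ℕ × ℕ)}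
    (h : RibWith n i g t) (h' : RibWith n i' g' t') (hd : Disjoint t t') {k : ℤ}
    (h1 : i ≤ k) (h2 : k < i + n) (h3 : i' ≤ k) (h4 : k < i' + n) : g k ≠ g' k := by
  intro he
  have a := h.cell h1 h2
  have b := h'.cell h3 h4
  rw [← he] at b
  exact Finset.disjoint_left.1 hd a b

/-- In a horizontal strip, the ribbon `t` with the rightmost head can be removed.  Otherwise some
ribbon `t'` with a head further left has a cell below `t` on a common diagonal; two disjoint
ribbons cannot cross, so the head of `t'` also lies below `t`, and the cell above that head
belongs to the strip. -/
theorem removable_horizontal {n : ℕ} (hn : 1 ≤ n) {μ ν : YoungDiagram}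
    {F : Set (Finset (ℕ × ℕ))}
    (hcov : ∀ x, (∃ t ∈ F, x ∈ t) ↔ x ∈ ν ∧ x ∉ μ)
    (hrib : ∀ t ∈ F, ∃ i, RibAt n i t)
    (hdisj : ∀ t ∈ F, ∀ t' ∈ F, t ≠ t' → Disjoint t t')
    (htouch : ∀ t ∈ F, (topRight t).1 = 0 ∨
      ∀ t' ∈ F, ((topRight t).1 - 1, (topRight t).2) ∉ t')
    {t : Finset (ℕ × ℕ)} (ht : t ∈ F) {i : ℤ} (hi : RibAt n i t)
    (hmax : ∀ t' ∈ F, ∀ j, RibAt n j t' → j ≤ i) :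
    ∃ κ : YoungDiagram, κ ≤ ν ∧ t = ν.cells \ κ.cells := by
  obtain ⟨g, hg⟩ := hi
  have hsub : ∀ s ∈ F, ∀ x ∈ s, x ∈ ν ∧ x ∉ μ := fun s hs x hx => (hcov x).1 ⟨s, hs, hx⟩
  have key : ∀ t' ∈ F, t' ≠ t → ∀ j g', RibWith n j g' t' → ∀ k, i ≤ k → j ≤ k → k < j + n →
      ¬ g k < g' k := by
    intro t' ht' hne j g' hg' k h1 h2 h3 hlt
    have hji := hmax t' ht' j ⟨g', hg'⟩
    have hstay : ∀ m : ℕ, k + m < j + n → g (k + m) < g' (k + m) := by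
      intro m
      induction m with
      | zero => intro _; simpa using hlt
      | succ m ih =>
        intro hm
        push_cast at hm ⊢
        rw [← add_assoc] at hm ⊢
        have a := ih (by omega)
        have b := hg.1 (k + m) (by omega) (by omega)
        have b' := hg'.1 (k + m) (by omega) (by omega)
        have c := hg.ne_of_disjoint hg' (hdisj t ht t' ht' hne.symm) (k := k + m + 1)
          (by omega) (by omega) (by omega) (by omega)
        omega
    have hend := hstay (j + n - 1 - k).toNat (by omega)
    rw [show k + ((j + n - 1 - k).toNat : ℤ) = j + n - 1 by omega] at hend
    have hhead := htouch t' ht'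
    have hmem := hg'.cell (k := j + n - 1) (by omega) (by omega)
    have hmem' := hg.cell (k := j + n - 1) (by omega) (by omega)
    rw [hg'.topRight hn] at hhead
    have p1 := hg.2.1 (j + n - 1) (by omega) (by omega)
    have p2 := hg'.2.1 (j + n - 1) (by omega) (by omega)
    simp only at hhead
    rcases hhead with h0 | h0
    · omega
    · have hν : ((g' (j + n - 1) - (j + n - 1)).toNat - 1, (g' (j + n - 1)).toNat) ∈ ν :=
        ν.up_left_mem (Nat.sub_le _ _) le_rfl (hsub t' ht' _ hmem).1
      have hμ : ((g' (j + n - 1) - (j + n - 1)).toNat - 1, (g' (j + n - 1)).toNat) ∈ μ := by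
        by_contra hc
        obtain ⟨s, hs, hs'⟩ := (hcov _).2 ⟨hν, hc⟩
        exact h0 s hs hs'
      exact (hsub t ht _ hmem').2 (μ.up_left_mem (by omega) (by omega) hμ)
  apply exists_sdiff_of_closed (fun x hx => (hsub t ht x hx).1)
  · intro r c hm hν
    by_contra hnot
    obtain ⟨t', ht', hm'⟩ := (hcov (r + 1, c)).2
      ⟨hν, fun h => (hsub t ht _ hm).2 (μ.up_left_mem (Nat.le_succ r) le_rfl h)⟩
    have hne : t' ≠ t := fun h => hnot (h ▸ hm')
    obtain ⟨j, hj⟩ := hrib t' ht'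
    have hji := hmax t' ht' j hj
    obtain ⟨g', hg'⟩ := hj
    have b := hg.content_bounds hm
    have b' := hg'.content_bounds hm'
    set k : ℤ := (c : ℤ) - r with hk
    have e : content (r, c) = k := rfl
    have e' : content (r + 1, c) = k - 1 := by simp only [content]; push_cast; omega
    rw [e] at b
    rw [e'] at b'
    simp only at b b'
    by_cases hlast : k < j + n
    · have s := hg'.1 (k - 1) (by omega) (by omega)
      rw [sub_add_cancel] at s
      have c1 := hg.ne_of_disjoint hg' (hdisj t ht t' ht' hne.symm) (k := k)
          (by omega) (by omega) (by omega) (by omega)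
      exact key t' ht' hne j g' hg' k (by omega) (by omega) (by omega) (by omega)
    · have hhead := htouch t' ht'
      rw [hg'.topRight hn, show j + n - 1 = k - 1 by omega, ← b'.2.2] at hhead
      simp only [Int.toNat_natCast] at hhead
      rw [show ((c : ℤ) - (k - 1)).toNat = r + 1 by omega] at hhead
      rcases hhead with h0 | h0
      · omega
      · exact h0 t ht hm
  · intro r c hm hν
    by_contra hnot
    obtain ⟨t', ht', hm'⟩ := (hcov (r, c + 1)).2
      ⟨hν, fun h => (hsub t ht _ hm).2 (μ.up_left_mem le_rfl (Nat.le_succ c) h)⟩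
    have hne : t' ≠ t := fun h => hnot (h ▸ hm')
    obtain ⟨j, hj⟩ := hrib t' ht'
    have hji := hmax t' ht' j hj
    obtain ⟨g', hg'⟩ := hj
    have b := hg.content_bounds hm
    have b' := hg'.content_bounds hm'
    set k : ℤ := (c : ℤ) - r with hk
    have e : content (r, c) = k := rfl
    have e' : content (r, c + 1) = k + 1 := by simp only [content]; push_cast; omega
    rw [e] at b
    rw [e'] at b'
    simp only at b b'
    push_cast at b'
    have s := hg.1 k (by omega) (by omega)
    have c1 := hg.ne_of_disjoint hg' (hdisj t ht t' ht' hne.symm) (k := k + 1)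
          (by omega) (by omega) (by omega) (by omega)
    exact key t' ht' hne j g' hg' (k + 1) (by omega) (by omega) (by omega) (by omega)

/-- In a vertical strip, the ribbon `t` with the leftmost tail can be removed, by the mirror image
of the argument for `removable_horizontal`. -/
theorem removable_vertical {n : ℕ} (hn : 1 ≤ n) {μ ν : YoungDiagram}
    {F : Set (Finset (ℕ × ℕ))}
    (hcov : ∀ x, (∃ t ∈ F, x ∈ t) ↔ x ∈ ν ∧ x ∉ μ)
    (hrib : ∀ t ∈ F, ∃ i, RibAt n i t)
    (hdisj : ∀ t ∈ F, ∀ t' ∈ F, t ≠ t' → Disjoint t t')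
    (htouch : ∀ t ∈ F, (bottomLeft t).2 = 0 ∨
      ∀ t' ∈ F, ((bottomLeft t).1, (bottomLeft t).2 - 1) ∉ t')
    {t : Finset (ℕ × ℕ)} (ht : t ∈ F) {i : ℤ} (hi : RibAt n i t)
    (hmin : ∀ t' ∈ F, ∀ j, RibAt n j t' → i ≤ j) :
    ∃ κ : YoungDiagram, κ ≤ ν ∧ t = ν.cells \ κ.cells := by
  obtain ⟨g, hg⟩ := hi
  have hsub : ∀ s ∈ F, ∀ x ∈ s, x ∈ ν ∧ x ∉ μ := fun s hs x hx => (hcov x).1 ⟨s, hs, hx⟩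
  have key : ∀ t' ∈ F, t' ≠ t → ∀ j g', RibWith n j g' t' → ∀ k, k < i + n → j ≤ k →
      k < j + n → ¬ g k < g' k := by
    intro t' ht' hne j g' hg' k h1 h2 h3 hlt
    have hji := hmin t' ht' j ⟨g', hg'⟩
    have hstay : ∀ m : ℕ, j ≤ k - m → g (k - m) < g' (k - m) := by
      intro m
      induction m with
      | zero => intro _; simpa using hlt
      | succ m ih =>
        intro hm
        have a := ih (by push_cast at hm; omega)
        have b := hg.1 (k - (m + 1 : ℕ)) (by omega) (by omega)
        have b' := hg'.1 (k - (m + 1 : ℕ)) (by omega) (by omega)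
        have c := hg.ne_of_disjoint hg' (hdisj t ht t' ht' hne.symm) (k := k - (m + 1 : ℕ))
          (by omega) (by omega) (by omega) (by omega)
        rw [show k - ((m + 1 : ℕ) : ℤ) + 1 = k - m by push_cast; ring] at b b'
        omega
    have hend := hstay (k - j).toNat (by omega)
    rw [show k - ((k - j).toNat : ℤ) = j by omega] at hend
    have htail := htouch t' ht'
    have hmem := hg'.cell (k := j) (by omega) (by omega)
    have hmem' := hg.cell (k := j) (by omega) (by omega)
    rw [hg'.bottomLeft hn] at htail
    have p1 := hg.2.1 j (by omega) (by omega)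
    have p2 := hg'.2.1 j (by omega) (by omega)
    simp only at htail
    rcases htail with h0 | h0
    · omega
    · have hν : ((g' j - j).toNat, (g' j).toNat - 1) ∈ ν :=
        ν.up_left_mem le_rfl (Nat.sub_le _ _) (hsub t' ht' _ hmem).1
      have hμ : ((g' j - j).toNat, (g' j).toNat - 1) ∈ μ := by
        by_contra hc
        obtain ⟨s, hs, hs'⟩ := (hcov _).2 ⟨hν, hc⟩
        exact h0 s hs hs'
      exact (hsub t ht _ hmem').2 (μ.up_left_mem (by omega) (by omega) hμ)
  apply exists_sdiff_of_closed (fun x hx => (hsub t ht x hx).1)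
  · intro r c hm hν
    by_contra hnot
    obtain ⟨t', ht', hm'⟩ := (hcov (r + 1, c)).2
      ⟨hν, fun h => (hsub t ht _ hm).2 (μ.up_left_mem (Nat.le_succ r) le_rfl h)⟩
    have hne : t' ≠ t := fun h => hnot (h ▸ hm')
    obtain ⟨j, hj⟩ := hrib t' ht'
    have hji := hmin t' ht' j hj
    obtain ⟨g', hg'⟩ := hj
    have b := hg.content_bounds hm
    have b' := hg'.content_bounds hm'
    set k : ℤ := (c : ℤ) - r with hk
    have e : content (r, c) = k := rfl
    have e' : content (r + 1, c) = k - 1 := by simp only [content]; push_cast; omega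
    rw [e] at b
    rw [e'] at b'
    simp only at b b'
    have s := hg.1 (k - 1) (by omega) (by omega)
    rw [sub_add_cancel] at s
    have c1 := hg.ne_of_disjoint hg' (hdisj t ht t' ht' hne.symm) (k := k - 1)
          (by omega) (by omega) (by omega) (by omega)
    exact key t' ht' hne j g' hg' (k - 1) (by omega) (by omega) (by omega) (by omega)
  · intro r c hm hν
    by_contra hnot
    obtain ⟨t', ht', hm'⟩ := (hcov (r, c + 1)).2
      ⟨hν, fun h => (hsub t ht _ hm).2 (μ.up_left_mem le_rfl (Nat.le_succ c) h)⟩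
    have hne : t' ≠ t := fun h => hnot (h ▸ hm')
    obtain ⟨j, hj⟩ := hrib t' ht'
    have hji := hmin t' ht' j hj
    obtain ⟨g', hg'⟩ := hj
    have b := hg.content_bounds hm
    have b' := hg'.content_bounds hm'
    set k : ℤ := (c : ℤ) - r with hk
    have e : content (r, c) = k := rfl
    have e' : content (r, c + 1) = k + 1 := by simp only [content]; push_cast; omega
    rw [e] at b
    rw [e'] at b'
    simp only at b b'
    push_cast at b'
    by_cases hfirst : j ≤ k
    · have s := hg'.1 k (by omega) (by omega)
      have c1 := hg.ne_of_disjoint hg' (hdisj t ht t' ht' hne.symm) (k := k)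
          (by omega) (by omega) (by omega) (by omega)
      exact key t' ht' hne j g' hg' k (by omega) (by omega) (by omega) (by omega)
    · have htail := htouch t' ht'
      rw [hg'.bottomLeft hn, show j = k + 1 by omega, ← b'.2.2] at htail
      simp only at htail
      rw [show ((c : ℤ) + 1 - (k + 1)).toNat = r by omega,
        show ((c : ℤ) + 1).toNat = c + 1 by omega] at htail
      rcases htail with h0 | h0
      · omega
      · exact h0 t ht hm

end Removal

/-! ### Tableaux and sequences of bead moves -/

section Tableaux

variable {L : Type*}

theorem mem_sup_filter {T : Finset (Finset (ℕ × ℕ) × L)} {P : Finset (ℕ × ℕ) × L → Prop}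
    [DecidablePred P] {x : ℕ × ℕ} :
    x ∈ ((T.filter P).sup fun p => p.1) ↔ ∃ p ∈ T, P p ∧ x ∈ p.1 := by
  simp only [Finset.mem_sup, Finset.mem_filter, and_assoc]

variable {R : Type*} [CommRing R]

/-- The weight of a tableau as a product over its ribbons. -/
noncomputable def ribWeight (q : R) (w : L → R) (T : Finset (Finset (ℕ × ℕ) × L)) : R :=
  ∏ p ∈ T, q ^ spin p.1 * w p.2

theorem weight_eq_ribWeight [Fintype L] (q : R) (w : L → R)
    (T : Finset (Finset (ℕ × ℕ) × L)) :
    q ^ tabSpin T * ∏ a : L, w a ^ tabWt T a = ribWeight q w T := by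
  classical
  unfold ribWeight tabSpin tabWt
  rw [Finset.prod_mul_distrib, Finset.prod_pow_eq_pow_sum,
    ← Finset.prod_fiberwise T Prod.snd fun p => w p.2]
  congr 1
  apply Finset.prod_congr rfl
  intro a _
  rw [← Finset.prod_const]
  exact Finset.prod_congr rfl fun p hp => by rw [(Finset.mem_filter.1 hp).2]

/-- The operator of a list of possible ribbon additions (label, leftmost content), the first
entry of the list being the last to be carried out. -/
noncomputable def evOp (q : R) (n : ℕ) (w : L → R) (l : List (L × ℤ)) :
    Module.End R ((ℤ → Bool) → R) :=
  (l.map fun e => 1 + w e.1 • ribOp q n e.2).prod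

/-- All ribbons of `T` occur in the list `l`. -/
def Fits (n : ℕ) (l : List (L × ℤ)) (T : Finset (Finset (ℕ × ℕ) × L)) : Prop :=
  ∀ p ∈ T, ∃ i, RibAt n i p.1 ∧ (p.2, i) ∈ l

theorem evOp_cons_apply (q : R) (n : ℕ) (w : L → R) (a : L) (i : ℤ) (l : List (L × ℤ))
    (f : (ℤ → Bool) → R) (S : ℤ → Bool) :
    evOp q n w ((a, i) :: l) f S = evOp q n w l f S +
      w a * if CanUnmove n i S then q ^ beadsBetween n i S * evOp q n w l f (unmove n i S)
        else 0 := by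
  unfold evOp
  rw [List.map_cons, List.prod_cons, Module.End.mul_apply, LinearMap.add_apply,
    Module.End.one_apply, LinearMap.smul_apply, Pi.add_apply, Pi.smul_apply, ribOp_apply,
    smul_eq_mul]

variable [LinearOrder L]

/-- `e'` is carried out before `e`: labels increase, and for equal labels the contents increase
for a horizontal letter and decrease for a vertical one. -/
def Before (horiz : L → Prop) (e e' : L × ℤ) : Prop :=
  e'.1 < e.1 ∨ e'.1 = e.1 ∧ (horiz e.1 → e'.2 < e.2) ∧ (¬ horiz e.1 → e.2 < e'.2)

/-- The conditions of `IsSuperTableau`, spelled out in terms of membership of cells. -/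
structure ST (n : ℕ) (μ ν : YoungDiagram) (horiz : L → Prop)
    (T : Finset (Finset (ℕ × ℕ) × L)) : Prop where
  le : μ ≤ ν
  rib : ∀ p ∈ T, IsRibbon n p.1
  disj : ∀ p ∈ T, ∀ p' ∈ T, p ≠ p' → Disjoint p.1 p'.1
  cov : ∀ x, (∃ p ∈ T, x ∈ p.1) ↔ x ∈ ν ∧ x ∉ μ
  pre : ∀ j : L, ∃ κ : YoungDiagram, ∀ x, x ∈ κ ↔ x ∈ μ ∨ ∃ p ∈ T, p.2 ≤ j ∧ x ∈ p.1
  north : ∀ p ∈ T, horiz p.2 → (topRight p.1).1 = 0 ∨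
    ∀ p' ∈ T, p'.2 = p.2 → ((topRight p.1).1 - 1, (topRight p.1).2) ∉ p'.1
  west : ∀ p ∈ T, ¬ horiz p.2 → (bottomLeft p.1).2 = 0 ∨
    ∀ p' ∈ T, p'.2 = p.2 → ((bottomLeft p.1).1, (bottomLeft p.1).2 - 1) ∉ p'.1

theorem isSuperTableau_iff {n : ℕ} {μ ν : YoungDiagram} {horiz : L → Prop}
    {T : Finset (Finset (ℕ × ℕ) × L)} :
    IsSuperTableau n μ ν (fun a b : L => a ≤ b) horiz T ↔ ST n μ ν horiz T := by
  have hcov : (T.sup fun p => p.1) = ν.cells \ μ.cells ↔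
      ∀ x, (∃ p ∈ T, x ∈ p.1) ↔ x ∈ ν ∧ x ∉ μ := by
    rw [Finset.ext_iff]
    simp only [Finset.mem_sup, mem_sdiff_cells]
  have hpre : ∀ (j : L) (κ : YoungDiagram) [DecidablePred fun p : Finset (ℕ × ℕ) × L => p.2 ≤ j],
      κ.cells = μ.cells ∪ ((T.filter fun p => p.2 ≤ j).sup fun p => p.1) ↔
      ∀ x, x ∈ κ ↔ x ∈ μ ∨ ∃ p ∈ T, p.2 ≤ j ∧ x ∈ p.1 := by
    intro j κ _
    rw [Finset.ext_iff]
    simp only [Finset.mem_union, mem_sup_filter, YoungDiagram.mem_cells]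
  unfold IsSuperTableau TouchesNorth TouchesWest
  simp only [hcov, hpre, mem_sup_filter, not_exists, not_and]
  constructor
  · rintro ⟨h1, h2, h3, h4, h5, h6⟩
    exact ⟨h1, h2, h3, h4, h5, fun p hp => (h6 p hp).1, fun p hp => (h6 p hp).2⟩
  · rintro ⟨h1, h2, h3, h4, h5, h6, h7⟩
    exact ⟨h1, h2, h3, h4, h5, fun p hp => ⟨h6 p hp, h7 p hp⟩⟩

theorem mem_superTableaux [Fintype L] {n : ℕ} {μ ν : YoungDiagram} {horiz : L → Prop}
    {T : Finset (Finset (ℕ × ℕ) × L)} :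
    T ∈ superTableaux n μ ν L (fun a b : L => a ≤ b) horiz ↔ ST n μ ν horiz T := by
  classical
  unfold superTableaux
  rw [Finset.mem_filter, isSuperTableau_iff, and_iff_right_iff_imp]
  intro h
  rw [Finset.mem_powerset]
  intro p hp
  rw [Finset.mem_product]
  refine ⟨Finset.mem_powerset.2 fun x hx => ?_, Finset.mem_univ _⟩
  exact mem_sdiff_cells.2 ((h.cov x).1 ⟨p, hp, hx⟩)

theorem ST.sub {n : ℕ} {μ ν : YoungDiagram} {horiz : L → Prop}
    {T : Finset (Finset (ℕ × ℕ) × L)} (h : ST n μ ν horiz T) {p : Finset (ℕ × ℕ) × L}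
    (hp : p ∈ T) {x : ℕ × ℕ} (hx : x ∈ p.1) : x ∈ ν ∧ x ∉ μ :=
  (h.cov x).1 ⟨p, hp, hx⟩

theorem ST.eq_of_mem {n : ℕ} {μ ν : YoungDiagram} {horiz : L → Prop}
    {T : Finset (Finset (ℕ × ℕ) × L)} (h : ST n μ ν horiz T) {p p' : Finset (ℕ × ℕ) × L}
    (hp : p ∈ T) (hp' : p' ∈ T) {x : ℕ × ℕ} (hx : x ∈ p.1) (hx' : x ∈ p'.1) : p = p' := by
  by_contra hne
  exact Finset.disjoint_left.1 (h.disj p hp p' hp' hne) hx hx'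

/-- The ribbons with labels `< a` also fill up a Young diagram. -/
theorem ST.lower {n : ℕ} {μ ν : YoungDiagram} {horiz : L → Prop}
    {T : Finset (Finset (ℕ × ℕ) × L)} (h : ST n μ ν horiz T) (a : L) :
    ∃ κ : YoungDiagram, ∀ x, x ∈ κ ↔ x ∈ μ ∨ ∃ p ∈ T, p.2 < a ∧ x ∈ p.1 := by
  by_cases hB : ((T.image Prod.snd).filter fun b => b < a).Nonempty
  · obtain ⟨b, hb, hmax⟩ := Finset.exists_max_image _ id hB
    obtain ⟨κ, hκ⟩ := h.pre b
    refine ⟨κ, fun x => ?_⟩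
    rw [hκ]
    apply or_congr_right
    constructor
    · rintro ⟨p, hp, hpb, hx⟩
      exact ⟨p, hp, hpb.trans_lt (Finset.mem_filter.1 hb).2, hx⟩
    · rintro ⟨p, hp, hpa, hx⟩
      exact ⟨p, hp, hmax _ (Finset.mem_filter.2 ⟨Finset.mem_image_of_mem _ hp, hpa⟩), hx⟩
  · refine ⟨μ, fun x => ⟨Or.inl, ?_⟩⟩
    rintro (hx | ⟨p, hp, hpa, hx⟩)
    · exact hx
    · exact absurd ⟨p.2, Finset.mem_filter.2 ⟨Finset.mem_image_of_mem _ hp, hpa⟩⟩ hB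

/-- The ribbon that comes last, in the order of the labels and, within a label, from left to
right in a horizontal strip and from right to left in a vertical one, can be removed. -/
theorem ST.peel {n : ℕ} (hn : 1 ≤ n) {μ ν : YoungDiagram} {horiz : L → Prop}
    {T : Finset (Finset (ℕ × ℕ) × L)} (h : ST n μ ν horiz T) {t : Finset (ℕ × ℕ)} {a : L}
    (hp : (t, a) ∈ T) {i : ℤ} (hi : RibAt n i t)
    (hlast : ∀ p ∈ T, p.2 < a ∨ p.2 = a ∧
      ∀ j, RibAt n j p.1 → (horiz a → j ≤ i) ∧ (¬ horiz a → i ≤ j)) :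
    ∃ κ : YoungDiagram, κ ≤ ν ∧ t = ν.cells \ κ.cells ∧ ST n μ κ horiz (T.erase (t, a)) := by
  obtain ⟨κa, hκa⟩ := h.lower a
  have hcov : ∀ x, (∃ s ∈ {s | (s, a) ∈ T}, x ∈ s) ↔ x ∈ ν ∧ x ∉ κa := by
    intro x
    rw [hκa]
    constructor
    · rintro ⟨s, hs, hx⟩
      refine ⟨(h.sub hs hx).1, ?_⟩
      rintro (hx' | ⟨p, hp', hlt, hx'⟩)
      · exact (h.sub hs hx).2 hx'
      · rw [h.eq_of_mem hp' hs hx' hx] at hlt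
        exact lt_irrefl _ hlt
    · rintro ⟨hx, hx'⟩
      obtain ⟨p, hp', hxp⟩ := (h.cov x).2 ⟨hx, fun hm => hx' (Or.inl hm)⟩
      rcases hlast p hp' with hlt | ⟨rfl, -⟩
      · exact absurd (Or.inr ⟨p, hp', hlt, hxp⟩) hx'
      · exact ⟨p.1, hp', hxp⟩
  have hrib : ∀ s ∈ {s | (s, a) ∈ T}, ∃ j, RibAt n j s := fun s hs =>
    (h.rib _ hs).exists_ribAt hn
  have hdisj : ∀ s ∈ {s | (s, a) ∈ T}, ∀ s' ∈ {s | (s, a) ∈ T}, s ≠ s' → Disjoint s s' :=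
    fun s hs s' hs' hne => h.disj _ hs _ hs' fun he => hne (congrArg Prod.fst he)
  have hlast' : ∀ s ∈ {s | (s, a) ∈ T}, ∀ j, RibAt n j s →
      (horiz a → j ≤ i) ∧ (¬ horiz a → i ≤ j) := by
    intro s hs j hj
    rcases hlast _ hs with hlt | ⟨-, h'⟩
    · exact absurd hlt (lt_irrefl a)
    · exact h' j hj
  have hrem : ∃ κ : YoungDiagram, κ ≤ ν ∧ t = ν.cells \ κ.cells := by
    by_cases hor : horiz a
    · exact removable_horizontal hn hcov hrib hdisj
        (fun s hs => (h.north _ hs hor).imp_right fun h' s' hs' => h' _ hs' rfl) hp hi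
        (fun s hs j hj => (hlast' s hs j hj).1 hor)
    · exact removable_vertical hn hcov hrib hdisj
        (fun s hs => (h.west _ hs hor).imp_right fun h' s' hs' => h' _ hs' rfl) hp hi
        (fun s hs j hj => (hlast' s hs j hj).2 hor)
  obtain ⟨κ, hκ, ht⟩ := hrem
  have hmem : ∀ x, x ∈ κ ↔ x ∈ ν ∧ x ∉ t := by
    intro x
    rw [ht, mem_sdiff_cells]
    have := @hκ x
    tauto
  have hμκ : μ ≤ κ := fun x hx => (hmem x).2 ⟨h.le hx, fun hxt => (h.sub hp hxt).2 hx⟩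
  have hcov' : ∀ x, (∃ p ∈ T.erase (t, a), x ∈ p.1) ↔ x ∈ κ ∧ x ∉ μ := by
    intro x
    rw [hmem]
    constructor
    · rintro ⟨p, hpT, hx⟩
      rw [Finset.mem_erase] at hpT
      refine ⟨⟨(h.sub hpT.2 hx).1, fun hxt => hpT.1 (h.eq_of_mem hpT.2 hp hx hxt)⟩,
        (h.sub hpT.2 hx).2⟩
    · rintro ⟨⟨hx, hxt⟩, hxμ⟩
      obtain ⟨p, hp', hxp⟩ := (h.cov x).2 ⟨hx, hxμ⟩
      exact ⟨p, Finset.mem_erase.2 ⟨fun he => hxt (by rw [he] at hxp; exact hxp), hp'⟩, hxp⟩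
  refine ⟨κ, hκ, ht, hμκ, ?_, ?_, hcov', ?_, ?_, ?_⟩
  · exact fun p hp' => h.rib p (Finset.mem_of_mem_erase hp')
  · exact fun p hp1 p' hp2 => h.disj p (Finset.mem_of_mem_erase hp1) p'
      (Finset.mem_of_mem_erase hp2)
  · intro j
    by_cases haj : a ≤ j
    · refine ⟨κ, fun x => ?_⟩
      have hall : (∃ p ∈ T.erase (t, a), p.2 ≤ j ∧ x ∈ p.1) ↔ ∃ p ∈ T.erase (t, a), x ∈ p.1 := by
        constructor
        · rintro ⟨p, h1, -, h2⟩
          exact ⟨p, h1, h2⟩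
        · rintro ⟨p, h1, h2⟩
          refine ⟨p, h1, ?_, h2⟩
          rcases hlast p (Finset.mem_of_mem_erase h1) with h3 | ⟨h3, -⟩
          · exact h3.le.trans haj
          · exact h3.le.trans haj
      rw [hall, hcov']
      have := @hμκ x
      tauto
    · obtain ⟨κ', hκ'⟩ := h.pre j
      refine ⟨κ', fun x => ?_⟩
      rw [hκ']
      apply or_congr_right
      constructor
      · rintro ⟨p, h1, h2, h3⟩
        refine ⟨p, Finset.mem_erase.2 ⟨?_, h1⟩, h2, h3⟩
        rintro rfl
        exact haj h2
      · rintro ⟨p, h1, h2, h3⟩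
        exact ⟨p, Finset.mem_of_mem_erase h1, h2, h3⟩
  · exact fun p hp' hor => (h.north p (Finset.mem_of_mem_erase hp') hor).imp_right
      fun h' p' hp'' => h' p' (Finset.mem_of_mem_erase hp'')
  · exact fun p hp' hor => (h.west p (Finset.mem_of_mem_erase hp') hor).imp_right
      fun h' p' hp'' => h' p' (Finset.mem_of_mem_erase hp'')

/-- Adding a ribbon after all others, in the order described in `ST.peel`, yields a tableau. -/
theorem ST.insert {n : ℕ} (hn : 1 ≤ n) {μ κ ν : YoungDiagram} {horiz : L → Prop}
    {T : Finset (Finset (ℕ × ℕ) × L)} (h : ST n μ κ horiz T) (hκ : κ ≤ ν) {a : L} {i : ℤ}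
    (hi : RibAt n i (ν.cells \ κ.cells))
    (hlast : ∀ p ∈ T, p.2 < a ∨ p.2 = a ∧
      ∀ j, RibAt n j p.1 → (horiz a → j < i) ∧ (¬ horiz a → i < j)) :
    (ν.cells \ κ.cells, a) ∉ T ∧ ST n μ ν horiz (insert (ν.cells \ κ.cells, a) T) := by
  have hcov : ∀ x, (∃ p ∈ Insert.insert (ν.cells \ κ.cells, a) T, x ∈ p.1) ↔ x ∈ ν ∧ x ∉ μ := by
    intro x
    rw [Finset.exists_mem_insert, h.cov, mem_sdiff_cells]
    have h1 := @hκ x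
    have h2 := @h.le x
    tauto
  have hle : ∀ p ∈ T, p.2 ≤ a := by
    intro p hp
    rcases hlast p hp with h3 | ⟨h3, -⟩
    · exact h3.le
    · exact h3.le
  have hnew : ∀ p ∈ T, Disjoint (ν.cells \ κ.cells) p.1 := by
    intro p hp
    rw [Finset.disjoint_left]
    exact fun x hx hx' => (mem_sdiff_cells.1 hx).2 (h.sub hp hx').1
  refine ⟨fun hT => ?_, h.le.trans hκ, ?_, ?_, hcov, ?_, ?_, ?_⟩
  · have hm := (hi.topRight_mem hn).1
    exact Finset.disjoint_left.1 (hnew _ hT) hm hm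
  · intro p hp
    rcases Finset.mem_insert.1 hp with rfl | hp
    · exact isRibbon_of_ribAt hκ hi
    · exact h.rib p hp
  · intro p hp p' hp' hne
    rcases Finset.mem_insert.1 hp with rfl | hp <;> rcases Finset.mem_insert.1 hp' with rfl | hp'
    · exact absurd rfl hne
    · exact hnew _ hp'
    · exact (hnew _ hp).symm
    · exact h.disj p hp p' hp' hne
  · intro j
    by_cases haj : a ≤ j
    · refine ⟨ν, fun x => ?_⟩
      have hall : (∃ p ∈ Insert.insert (ν.cells \ κ.cells, a) T, p.2 ≤ j ∧ x ∈ p.1) ↔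
          ∃ p ∈ Insert.insert (ν.cells \ κ.cells, a) T, x ∈ p.1 := by
        constructor
        · rintro ⟨p, h1, -, h2⟩
          exact ⟨p, h1, h2⟩
        · rintro ⟨p, h1, h2⟩
          refine ⟨p, h1, ?_, h2⟩
          rcases Finset.mem_insert.1 h1 with rfl | h1
          · exact haj
          · exact (hle p h1).trans haj
      rw [hall, hcov]
      have h1 := @hκ x
      have h2 := @h.le x
      tauto
    · obtain ⟨κ', hκ'⟩ := h.pre j
      refine ⟨κ', fun x => ?_⟩
      rw [hκ', Finset.exists_mem_insert]
      simp only [haj, false_and, false_or]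
  · intro p hp hor
    by_cases h0 : (topRight p.1).1 = 0
    · exact Or.inl h0
    right
    rcases Finset.mem_insert.1 hp with rfl | hp
    · -- the cell above the new head has content `i + n`, beyond all ribbons of the strip
      have hc := (hi.topRight_mem hn).2
      intro p' hp' hpa hx
      have hb : content ((topRight (ν.cells \ κ.cells)).1 - 1, (topRight (ν.cells \ κ.cells)).2) <
          i + n := by
        rcases Finset.mem_insert.1 hp' with rfl | hp'
        · exact (hi.content_bounds hx).2
        · obtain ⟨j, hj⟩ := (h.rib p' hp').exists_ribAt hn
          have := (hj.content_bounds hx).2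
          rcases hlast p' hp' with h3 | ⟨-, h3⟩
          · exact absurd hpa h3.ne
          · have := (h3 j hj).1 hor
            simp only at *
            omega
      simp only [content] at hc hb h0
      omega
    · intro p' hp' hpa
      rcases Finset.mem_insert.1 hp' with rfl | hp'
      · obtain ⟨j, hj⟩ := (h.rib p hp).exists_ribAt hn
        have hm := (h.sub hp (hj.topRight_mem hn).1).1
        intro hx
        exact (mem_sdiff_cells.1 hx).2 (κ.up_left_mem (Nat.sub_le _ _) le_rfl hm)
      · rcases h.north p hp hor with h1 | h1
        · exact absurd h1 h0
        · exact h1 p' hp' hpa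
  · intro p hp hor
    by_cases h0 : (bottomLeft p.1).2 = 0
    · exact Or.inl h0
    right
    rcases Finset.mem_insert.1 hp with rfl | hp
    · -- the cell left of the new tail has content `i - 1`, before all ribbons of the strip
      have hc := (hi.bottomLeft_mem hn).2
      intro p' hp' hpa hx
      have hb : i ≤ content ((bottomLeft (ν.cells \ κ.cells)).1,
          (bottomLeft (ν.cells \ κ.cells)).2 - 1) := by
        rcases Finset.mem_insert.1 hp' with rfl | hp'
        · exact (hi.content_bounds hx).1
        · obtain ⟨j, hj⟩ := (h.rib p' hp').exists_ribAt hn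
          have := (hj.content_bounds hx).1
          rcases hlast p' hp' with h3 | ⟨-, h3⟩
          · exact absurd hpa h3.ne
          · have := (h3 j hj).2 hor
            simp only at *
            omega
      simp only [content] at hc hb h0
      omega
    · intro p' hp' hpa
      rcases Finset.mem_insert.1 hp' with rfl | hp'
      · obtain ⟨j, hj⟩ := (h.rib p hp).exists_ribAt hn
        have hm := (h.sub hp (hj.bottomLeft_mem hn).1).1
        intro hx
        exact (mem_sdiff_cells.1 hx).2 (κ.up_left_mem le_rfl (Nat.sub_le _ _) hm)
      · rcases h.west p hp hor with h1 | h1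
        · exact absurd h1 h0
        · exact h1 p' hp' hpa

open scoped Classical in
/-- Matrix coefficients of products of ribbon operators count tableaux: expanding the product,
every choice of factors that does not act by zero builds a tableau ribbon by ribbon. -/
theorem sum_ribWeight_eq [Fintype L] {n : ℕ} (hn : 1 ≤ n) (μ : YoungDiagram) (horiz : L → Prop)
    (q : R) (w : L → R) (l : List (L × ℤ)) (hl : l.Pairwise (Before horiz)) :
    ∀ ν : YoungDiagram,
      ∑ T ∈ (superTableaux n μ ν L (fun a b : L => a ≤ b) horiz).filter (Fits n l),
        ribWeight q w T =
      evOp q n w l (fun S => if S = beads μ then 1 else 0) (beads ν) := by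
  induction l with
  | nil =>
    intro ν
    have hempty : ∀ T, T ∈ (superTableaux n μ ν L (fun a b : L => a ≤ b) horiz).filter
        (Fits n []) ↔ T = ∅ ∧ ν = μ := by
      intro T
      rw [Finset.mem_filter, mem_superTableaux]
      constructor
      · rintro ⟨h1, h2⟩
        have hT : T = ∅ := by
          rw [Finset.eq_empty_iff_forall_notMem]
          intro p hp
          obtain ⟨i, -, hi⟩ := h2 p hp
          simp at hi
        refine ⟨hT, le_antisymm (fun x hx => ?_) h1.le⟩
        by_contra hx'
        obtain ⟨p, hp, -⟩ := (h1.cov x).2 ⟨hx, hx'⟩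
        simp [hT] at hp
      · rintro ⟨rfl, rfl⟩
        refine ⟨⟨le_rfl, ?_, ?_, ?_, fun j => ⟨ν, ?_⟩, ?_, ?_⟩, ?_⟩ <;> simp [Fits]
    simp only [evOp, List.map_nil, List.prod_nil, Module.End.one_apply]
    by_cases h : ν = μ
    · rw [if_pos (by rw [h]), Finset.sum_eq_single_of_mem ∅ ((hempty ∅).2 ⟨rfl, h⟩)]
      · simp [ribWeight]
      · intro T hT hne
        exact absurd ((hempty T).1 hT).1 hne
    · rw [if_neg fun h' => h (beads_injective h')]
      apply Finset.sum_eq_zero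
      intro T hT
      exact absurd ((hempty T).1 hT).2 h
  | cons e l ih =>
    obtain ⟨a, i⟩ := e
    rw [List.pairwise_cons] at hl
    obtain ⟨hbefore, hl⟩ := hl
    intro ν
    rw [evOp_cons_apply, ← ih hl ν, ← Finset.sum_filter_add_sum_filter_not _ (Fits n l),
      Finset.filter_filter, Finset.filter_filter]
    -- what remains to be identified are the tableaux using the new event
    have hnotin : (a, i) ∉ l := by
      intro h
      rcases hbefore _ h with h | ⟨-, h1, h2⟩
      · exact lt_irrefl _ h
      · by_cases hor : horiz a
        · exact lt_irrefl _ (h1 hor)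
        · exact lt_irrefl _ (h2 hor)
    congr 1
    · apply Finset.sum_congr _ fun _ _ => rfl
      apply Finset.filter_congr
      intro T _
      constructor
      · exact fun h => h.2
      · refine fun h => ⟨fun p hp => ?_, h⟩
        obtain ⟨j, hj, hj'⟩ := h p hp
        exact ⟨j, hj, List.mem_cons_of_mem _ hj'⟩
    have hpeel : ∀ T, ST n μ ν horiz T → Fits n ((a, i) :: l) T → ¬ Fits n l T →
        ∃ κ : YoungDiagram, κ ≤ ν ∧ RibAt n i (ν.cells \ κ.cells) ∧
          (ν.cells \ κ.cells, a) ∈ T ∧ ST n μ κ horiz (T.erase (ν.cells \ κ.cells, a)) ∧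
          Fits n l (T.erase (ν.cells \ κ.cells, a)) := by
      intro T hT hfit hnot
      have hmem : ∃ t, (t, a) ∈ T ∧ RibAt n i t := by
        unfold Fits at hnot
        push Not at hnot
        obtain ⟨p, hp, hp'⟩ := hnot
        obtain ⟨j, hj, hj'⟩ := hfit p hp
        rcases List.mem_cons.1 hj' with he | hj'
        · obtain ⟨rfl, rfl⟩ := Prod.mk.inj he
          exact ⟨p.1, hp, hj⟩
        · exact absurd hj' (hp' j hj)
      obtain ⟨t, htT, ht⟩ := hmem
      have hlast : ∀ p ∈ T, p.2 < a ∨ p.2 = a ∧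
          ∀ j, RibAt n j p.1 → (horiz a → j ≤ i) ∧ (¬ horiz a → i ≤ j) := by
        intro p hp
        obtain ⟨j, hj, hj'⟩ := hfit p hp
        rcases List.mem_cons.1 hj' with he | hj'
        · obtain ⟨he1, rfl⟩ := Prod.mk.inj he
          exact Or.inr ⟨he1, fun j' hj' => by simp [hj.unique hn hj']⟩
        · rcases hbefore _ hj' with h | ⟨h0, h1, h2⟩
          · exact Or.inl h
          · refine Or.inr ⟨h0, fun j' hj' => ?_⟩
            rw [← hj.unique hn hj']
            exact ⟨fun h => (h1 h).le, fun h => (h2 h).le⟩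
      obtain ⟨κ, h1, rfl, h3⟩ := hT.peel hn htT ht hlast
      refine ⟨κ, h1, ht, htT, h3, ?_⟩
      intro p hp
      rw [Finset.mem_erase] at hp
      obtain ⟨j, hj, hj'⟩ := hfit p hp.2
      rcases List.mem_cons.1 hj' with he | hj'
      · -- two ribbons of `T` with the event `(a, i)` are both `ν / κ`, hence equal
        exfalso
        obtain ⟨he1, rfl⟩ := Prod.mk.inj he
        obtain ⟨κ', h1', h2', -⟩ :=
          hT.peel (t := p.1) (a := a) hn (by rw [← he1]; exact hp.2) hj hlast
        have e1 := (beads_of_ribAt hn h1 ht).2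
        have e2 := (beads_of_ribAt hn h1' (h2' ▸ hj)).2
        have e3 : κ = κ' := beads_injective (e1.trans e2.symm)
        apply hp.1
        apply Prod.ext
        · rw [e3, h2']
        · exact he1
      · exact ⟨j, hj, hj'⟩
    by_cases hcan : CanUnmove n i (beads ν)
    · rw [if_pos hcan]
      obtain ⟨κ, hκ, hrib⟩ := exists_unmove hn hcan
      have hb := (beads_of_ribAt hn hκ hrib).2
      have huniq : ∀ κ' : YoungDiagram, κ' ≤ ν → RibAt n i (ν.cells \ κ'.cells) → κ' = κ :=
        fun κ' h1 h2 => beads_injective ((beads_of_ribAt hn h1 h2).2.trans hb.symm)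
      rw [← hb, ← ih hl κ, Finset.mul_sum, Finset.mul_sum, ← spin_of_ribAt hn hκ hrib]
      have hins : ∀ T, ST n μ κ horiz T → Fits n l T → (ν.cells \ κ.cells, a) ∉ T ∧
          ST n μ ν horiz (insert (ν.cells \ κ.cells, a) T) := by
        intro T hT hfit
        apply hT.insert hn hκ hrib
        intro p hp
        obtain ⟨j, hj, hj'⟩ := hfit p hp
        rcases hbefore _ hj' with h | ⟨h0, h1, h2⟩
        · exact Or.inl h
        · refine Or.inr ⟨h0, fun j' hj' => ?_⟩
          rw [← hj.unique hn hj']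
          exact ⟨h1, h2⟩
      refine Finset.sum_bij' (fun T _ => T.erase (ν.cells \ κ.cells, a))
        (fun T _ => insert (ν.cells \ κ.cells, a) T) ?_ ?_ ?_ ?_ ?_
      · intro T hT
        rw [Finset.mem_filter, mem_superTableaux] at hT
        obtain ⟨κ', h1, h2, h3, h4, h5⟩ := hpeel T hT.1 hT.2.1 hT.2.2
        obtain rfl := huniq κ' h1 h2
        rw [Finset.mem_filter, mem_superTableaux]
        convert And.intro h4 h5
      · intro T hT
        rw [Finset.mem_filter, mem_superTableaux] at hT
        obtain ⟨h1, h2⟩ := hins T hT.1 hT.2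
        rw [Finset.mem_filter, mem_superTableaux]
        refine ⟨by convert h2, ?_, ?_⟩
        · intro p hp
          rcases Finset.mem_insert.1 hp with rfl | hp
          · exact ⟨i, hrib, List.mem_cons_self⟩
          · obtain ⟨j, hj, hj'⟩ := hT.2 p hp
            exact ⟨j, hj, List.mem_cons_of_mem _ hj'⟩
        · intro hf
          obtain ⟨j, hj, hj'⟩ := hf _ (Finset.mem_insert_self _ _)
          rw [hj.unique hn hrib] at hj'
          exact hnotin hj'
      · intro T hT
        rw [Finset.mem_filter, mem_superTableaux] at hT
        obtain ⟨κ', h1, h2, h3, h4, h5⟩ := hpeel T hT.1 hT.2.1 hT.2.2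
        obtain rfl := huniq κ' h1 h2
        exact Finset.insert_erase h3
      · intro T hT
        rw [Finset.mem_filter, mem_superTableaux] at hT
        exact Finset.erase_insert (hins T hT.1 hT.2).1
      · intro T hT
        rw [Finset.mem_filter, mem_superTableaux] at hT
        obtain ⟨κ', h1, h2, h3, h4, h5⟩ := hpeel T hT.1 hT.2.1 hT.2.2
        obtain rfl := huniq κ' h1 h2
        unfold ribWeight
        rw [← Finset.mul_prod_erase T _ h3]
        ring
    · rw [if_neg hcan, mul_zero]
      apply Finset.sum_eq_zero
      intro T hT
      rw [Finset.mem_filter, mem_superTableaux] at hT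
      obtain ⟨κ, h1, h2, -⟩ := hpeel T hT.1 hT.2.1 hT.2.2
      exact absurd (beads_of_ribAt hn h1 h2).1 hcan

end Tableaux

/-! ### Independence of the order of the letters -/

section Assembly

variable {L : Type*}

open scoped Classical in
/-- The possible ribbon additions with label `a` and leftmost content in `-K, …, N - 1 - K`, the
last one to be carried out first: contents increase in time for a horizontal letter, and decrease
for a vertical one. -/
noncomputable def letterEv (horiz : L → Prop) (K : ℤ) (N : ℕ) (a : L) : List (L × ℤ) :=
  if horiz a then (List.range N).reverse.map fun m : ℕ => (a, (m : ℤ) - K)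
  else (List.range N).map fun m : ℕ => (a, (m : ℤ) - K)

theorem mem_letterEv {horiz : L → Prop} {K : ℤ} {N : ℕ} {a : L} {e : L × ℤ} :
    e ∈ letterEv horiz K N a ↔ e.1 = a ∧ -K ≤ e.2 ∧ e.2 < N - K := by
  have : e ∈ letterEv horiz K N a ↔ ∃ m < N, (a, (m : ℤ) - K) = e := by
    unfold letterEv
    split_ifs <;> simp
  rw [this]
  constructor
  · rintro ⟨m, hm, rfl⟩
    exact ⟨rfl, by simp only; omega, by simp only; omega⟩
  · rintro ⟨h1, h2, h3⟩
    exact ⟨(e.2 + K).toNat, by omega, Prod.ext h1.symm (by simp only; omega)⟩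

theorem pairwise_letterEv [LinearOrder L] (horiz : L → Prop) (K : ℤ) (N : ℕ) (a : L) :
    (letterEv horiz K N a).Pairwise (Before horiz) := by
  unfold letterEv
  split_ifs with h
  · rw [List.pairwise_map, List.pairwise_reverse]
    refine List.pairwise_lt_range.imp fun hlt => Or.inr ⟨rfl, fun _ => ?_, fun h' => absurd h h'⟩
    simp only; omega
  · rw [List.pairwise_map]
    refine List.pairwise_lt_range.imp fun hlt => Or.inr ⟨rfl, fun h' => absurd h' h, fun _ => ?_⟩
    simp only; omega

variable {R : Type*} [CommRing R]

open scoped Classical in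
/-- The operator adding a horizontal, respectively vertical, strip of ribbons with label `a`. -/
noncomputable def letterOp (horiz : L → Prop) (q : R) (n : ℕ) (w : L → R) (K : ℤ) (N : ℕ) (a : L) :
    Module.End R ((ℤ → Bool) → R) :=
  if horiz a then decProd (fun m : ℕ => ribOp q n (m - K)) (w a) N
  else incProd (fun m : ℕ => ribOp q n (m - K)) (w a) N

theorem evOp_letterEv (horiz : L → Prop) (q : R) (n : ℕ) (w : L → R) (K : ℤ) (N : ℕ) (a : L) :
    evOp q n w (letterEv horiz K N a) = letterOp horiz q n w K N a := by
  unfold evOp letterEv letterOp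
  split_ifs with h
  · induction N with
    | zero => rfl
    | succ N ih =>
      rw [decProd, ← ih, List.range_succ, List.reverse_append]
      rfl
  · induction N with
    | zero => rfl
    | succ N ih =>
      rw [incProd, ← ih, List.range_succ, List.map_append, List.map_append, List.prod_append]
      simp

theorem evOp_flatMap (q : R) (n : ℕ) (w : L → R) (f : L → List (L × ℤ)) (ls : List L) :
    evOp q n w (ls.flatMap f) = (ls.map fun a => evOp q n w (f a)).prod := by
  induction ls with
  | nil => rfl
  | cons a ls ih =>
    rw [List.flatMap_cons, List.map_cons, List.prod_cons, ← ih]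
    simp [evOp]

open scoped Classical in
/-- The super LLT polynomial is a matrix coefficient of a product of strip operators, one for each
letter, the largest letter acting last. -/
theorem superLLT_eq [LinearOrder L] [Fintype L] {n : ℕ} (hn : 1 ≤ n) (μ lam : YoungDiagram)
    (horiz : L → Prop) (q : R) (z : L → R) (ls : List L) (hls : ls.Pairwise fun a b => b < a)
    (hall : ∀ a, a ∈ ls) :
    superLLT n μ lam L (fun a b : L => a ≤ b) horiz q z =
      (ls.map (letterOp horiz q n (fun a => if horiz a then z a else -z a) (lam.colLen 0)
        (lam.colLen 0 + lam.rowLen 0))).prod (fun S => if S = beads μ then 1 else 0)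
        (beads lam) := by
  set w : L → R := fun a => if horiz a then z a else -z a
  set K := lam.colLen 0
  set N := lam.colLen 0 + lam.rowLen 0
  have hpair : (ls.flatMap (letterEv horiz K N)).Pairwise (Before horiz) := by
    rw [List.pairwise_flatMap]
    refine ⟨fun a _ => pairwise_letterEv horiz K N a, hls.imp fun {a b} hab e he e' he' => ?_⟩
    left
    rw [(mem_letterEv.1 he).1, (mem_letterEv.1 he').1]
    exact hab
  have key := sum_ribWeight_eq hn μ horiz q w (ls.flatMap (letterEv horiz K N)) hpair lam
  rw [evOp_flatMap] at key
  simp only [evOp_letterEv] at key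
  rw [← key]
  unfold superLLT
  rw [Finset.filter_true_of_mem]
  · exact Finset.sum_congr rfl fun T _ => weight_eq_ribWeight q w T
  · intro T hT p hp
    rw [mem_superTableaux] at hT
    obtain ⟨i, hi⟩ := (hT.rib p hp).exists_ribAt hn
    refine ⟨i, hi, List.mem_flatMap.2 ⟨p.2, hall _, mem_letterEv.2 ⟨rfl, ?_⟩⟩⟩
    obtain ⟨h1, h2⟩ := hi.bottomLeft_mem hn
    have h3 := (hT.sub hp h1).1
    have h4 : ((bottomLeft p.1).1, 0) ∈ lam := lam.up_left_mem le_rfl (Nat.zero_le _) h3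
    have h5 : (0, (bottomLeft p.1).2) ∈ lam := lam.up_left_mem (Nat.zero_le _) le_rfl h3
    rw [YoungDiagram.mem_iff_lt_colLen] at h4
    rw [YoungDiagram.mem_iff_lt_rowLen] at h5
    unfold content at h2
    simp only [K, N]
    push_cast
    omega

/-- A product over a list splits when the letters of the two kinds commute with each other. -/
theorem list_prod_split {M : Type*} [Monoid M] {α β : Type*} (f : α ⊕ β → M)
    (hf : ∀ a b, Commute (f (Sum.inl a)) (f (Sum.inr b))) (l : List (α ⊕ β)) :
    (l.map f).prod =
      ((l.filter Sum.isLeft).map f).prod * ((l.filter Sum.isRight).map f).prod := by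
  induction l with
  | nil => simp
  | cons c l ih =>
    rcases c with a | b
    · rw [List.filter_cons_of_pos rfl, List.filter_cons_of_neg (by simp)]
      simp [ih, mul_assoc]
    · have hc : Commute (f (Sum.inr b)) ((l.filter Sum.isLeft).map f).prod := by
        apply Commute.list_prod_right
        intro x hx
        obtain ⟨y, hy, rfl⟩ := List.mem_map.1 hx
        obtain ⟨a, rfl⟩ := Sum.isLeft_iff.1 (List.mem_filter.1 hy).2
        exact (hf a b).symm
      rw [List.filter_cons_of_neg (by simp), List.filter_cons_of_pos rfl]
      simp [ih, ← mul_assoc, hc.eq]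

/-- The decreasing enumerations for two total orders that agree on the elements satisfying `P`
list these elements in the same order. -/
theorem filter_eq_of_pairwise {γ : Type*} {ls₁ ls₂ : List γ} {P : γ → Bool}
    {ord₁ ord₂ : LinearOrder γ} (h : ∀ a b, P a → P b → ord₁.lt a b → ord₂.lt a b)
    (h₁ : ls₁.Pairwise fun a b => ord₁.lt b a) (h₂ : ls₂.Pairwise fun a b => ord₂.lt b a)
    (hall₁ : ∀ a, a ∈ ls₁) (hall₂ : ∀ a, a ∈ ls₂) : ls₁.filter P = ls₂.filter P := by
  have p₁ : (ls₁.filter P).Pairwise fun a b => ord₂.lt b a := by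
    apply (h₁.filter P).imp_of_mem
    intro a b ha hb hlt
    exact h b a (List.mem_filter.1 hb).2 (List.mem_filter.1 ha).2 hlt
  have p₂ := h₂.filter P
  have hnd : ∀ l : List γ, (l.Pairwise fun a b => ord₂.lt b a) → l.Nodup :=
    fun l hl => List.Pairwise.imp (fun {a b} hlt he => by
      subst he
      exact @lt_irrefl _ ord₂.toPreorder _ hlt) hl
  apply List.Perm.eq_of_pairwise (le := fun a b => ord₂.lt b a) _ p₁ p₂
  · rw [List.perm_ext_iff_of_nodup (hnd _ p₁) (hnd _ p₂)]
    intro a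
    simp [List.mem_filter, hall₁, hall₂]
  · intro a b _ _ h h'
    exact absurd h' (@lt_asymm _ ord₂.toPreorder _ _ h)

theorem exists_sorted_list [LinearOrder L] [Fintype L] :
    ∃ ls : List L, (ls.Pairwise fun a b => b < a) ∧ ∀ a, a ∈ ls :=
  ⟨(Finset.univ.sort fun a b : L => a ≤ b).reverse,
    List.pairwise_reverse.2 (Finset.sortedLT_sort _).pairwise, by simp⟩

/-- Super LLT polynomials are compatible with ring homomorphisms, so their identities may be
checked over a polynomial ring. -/
theorem map_superLLT {S : Type*} [CommRing S] (φ : R →+* S) (n : ℕ) (μ lam : YoungDiagram)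
    [Fintype L] (le : L → L → Prop) (horiz : L → Prop) (q : R) (z : L → R) :
    φ (superLLT n μ lam L le horiz q z) =
      superLLT n μ lam L le horiz (φ q) (fun a => φ (z a)) := by
  unfold superLLT
  rw [map_sum]
  refine Finset.sum_congr rfl fun T _ => ?_
  rw [map_mul, map_pow, map_prod]
  congr 1
  refine Finset.prod_congr rfl fun a _ => ?_
  rw [map_pow]
  congr 1
  split_ifs <;> simp

/-- Order independence when `q` is a nonzero element of a domain: horizontal and vertical strip
operators commute, and both orders multiply the operators of each kind in the same order. -/
theorem order_independent_of_domain {n : ℕ} (hn : 1 ≤ n) (μ lam : YoungDiagram) (r s : ℕ)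
    (ord₁ ord₂ : LinearOrder (Fin r ⊕ Fin s))
    (hord₁A : ∀ i j : Fin r, i ≤ j → ord₁.le (Sum.inl i) (Sum.inl j))
    (hord₁A' : ∀ i j : Fin s, i ≤ j → ord₁.le (Sum.inr i) (Sum.inr j))
    (hord₂A : ∀ i j : Fin r, i ≤ j → ord₂.le (Sum.inl i) (Sum.inl j))
    (hord₂A' : ∀ i j : Fin s, i ≤ j → ord₂.le (Sum.inr i) (Sum.inr j))
    [IsDomain R] {q : R} (hq : q ≠ 0) (z : Fin r ⊕ Fin s → R) :
    superLLT n μ lam (Fin r ⊕ Fin s) ord₁.le (fun a => a.isLeft = true) q z =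
      superLLT n μ lam (Fin r ⊕ Fin s) ord₂.le (fun a => a.isLeft = true) q z := by
  obtain ⟨ls₁, h₁, hall₁⟩ := @exists_sorted_list _ ord₁ _
  obtain ⟨ls₂, h₂, hall₂⟩ := @exists_sorted_list _ ord₂ _
  have e₁ := @superLLT_eq _ _ _ ord₁ _ _ hn μ lam (fun a => a.isLeft = true) q z ls₁ h₁ hall₁
  have e₂ := @superLLT_eq _ _ _ ord₂ _ _ hn μ lam (fun a => a.isLeft = true) q z ls₂ h₂ hall₂
  refine e₁.trans (Eq.trans ?_ e₂.symm)
  have hcomm : ∀ (w : Fin r ⊕ Fin s → R) (K : ℤ) (N : ℕ) (a : Fin r) (b : Fin s),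
      Commute (letterOp (fun a => a.isLeft = true) q n w K N (Sum.inl a))
        (letterOp (fun a => a.isLeft = true) q n w K N (Sum.inr b)) := by
    intro w K N a b
    simp only [letterOp, Sum.isLeft_inl, Sum.isLeft_inr, if_true, Bool.false_eq_true, if_false]
    exact (ribOp_prod_comm hq hn K _ _ N).symm
  have refl₁ : ∀ a b, ord₁.lt a b → ¬ ord₁.le b a :=
    fun a b h => ((@lt_iff_le_not_ge _ ord₁.toPreorder a b).1 h).2
  have mk₂ : ∀ a b, ord₂.le a b → a ≠ b → ord₂.lt a b :=
    fun a b => @lt_of_le_of_ne _ ord₂.toPartialOrder a b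
  have f1 : ls₁.filter Sum.isLeft = ls₂.filter Sum.isLeft := by
    refine filter_eq_of_pairwise ?_ h₁ h₂ hall₁ hall₂
    intro a b ha hb hlt
    obtain ⟨i, rfl⟩ := Sum.isLeft_iff.1 ha
    obtain ⟨j, rfl⟩ := Sum.isLeft_iff.1 hb
    have hij : i < j := lt_of_not_ge fun h => refl₁ _ _ hlt (hord₁A _ _ h)
    exact mk₂ _ _ (hord₂A _ _ hij.le) fun h => hij.ne (Sum.inl_injective h)
  have f2 : ls₁.filter Sum.isRight = ls₂.filter Sum.isRight := by
    refine filter_eq_of_pairwise ?_ h₁ h₂ hall₁ hall₂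
    intro a b ha hb hlt
    obtain ⟨i, rfl⟩ := Sum.isRight_iff.1 ha
    obtain ⟨j, rfl⟩ := Sum.isRight_iff.1 hb
    have hij : i < j := lt_of_not_ge fun h => refl₁ _ _ hlt (hord₁A' _ _ h)
    exact mk₂ _ _ (hord₂A' _ _ hij.le) fun h => hij.ne (Sum.inr_injective h)
  rw [list_prod_split _ (hcomm _ _ _) ls₁, list_prod_split _ (hcomm _ _ _) ls₂, f1, f2]

end Assembly

/-- **Order-independence of super LLT polynomials** (Lam; Proposition 30 /
`prop:orderdoesntmatter`).  For fixed `n ≥ 1`, skew shape `lam/μ`, and alphabets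
`A = Fin r` (horizontal), `A' = Fin s` (vertical): if `ord₁` and `ord₂` are two total
orders on `A ⊕ A'`, each refining the natural orders of `A` and of `A'`, then the super
LLT polynomial computed with `ord₁` equals the one computed with `ord₂`, for any
coefficient ring and any values of the variables. -/
theorem superLLT_order_independent (n : ℕ) (hn : 1 ≤ n) (μ lam : YoungDiagram)
    (hμlam : μ ≤ lam) (r s : ℕ) (ord₁ ord₂ : LinearOrder (Fin r ⊕ Fin s))
    (hord₁A : ∀ i j : Fin r, i ≤ j → ord₁.le (Sum.inl i) (Sum.inl j))
    (hord₁A' : ∀ i j : Fin s, i ≤ j → ord₁.le (Sum.inr i) (Sum.inr j))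
    (hord₂A : ∀ i j : Fin r, i ≤ j → ord₂.le (Sum.inl i) (Sum.inl j))
    (hord₂A' : ∀ i j : Fin s, i ≤ j → ord₂.le (Sum.inr i) (Sum.inr j))
    (R : Type*) [CommRing R] (q : R) (z : Fin r ⊕ Fin s → R) :
    superLLT n μ lam (Fin r ⊕ Fin s) ord₁.le (fun a => a.isLeft = true) q z =
      superLLT n μ lam (Fin r ⊕ Fin s) ord₂.le (fun a => a.isLeft = true) q z := by
  -- specialize the identity with independent variables for `q` and all `z a`
  have key := order_independent_of_domain hn μ lam r s ord₁ ord₂ hord₁A hord₁A' hord₂A hord₂A'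
    (R := MvPolynomial (Option (Fin r ⊕ Fin s)) ℤ) (MvPolynomial.X_ne_zero none)
    (fun a => MvPolynomial.X (some a))
  have := congrArg (MvPolynomial.eval₂Hom (Int.castRingHom R) fun o => o.elim q z) key
  simpa only [map_superLLT, MvPolynomial.coe_eval₂Hom, MvPolynomial.eval₂_X, Option.elim_none,
    Option.elim_some] using this

end SuperLLT
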